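/- arXiv:1604.06997 — 6 statements merged into one kernel-verified Lean document; each statement's English description precedes it below -/
import Mathlib

section
/- For every integer k ≥ 2 and every k-decomposable permutation point set X of size n, the set BR of points of G whose pair is a bad pair satisfies |BR| ≤ 80 · n · log₂ k. -/
open Finset

attribute [local instance] Classical.propDecidable

/-- A point in the plane: first coordinate is the key, second is the time. -/
abbrev Pt : Type := ℤ × ℤ

/-- `r` lies in the closed axis-parallel rectangle with opposite corners `p` and `q`. -/
def inRect (p q r : Pt) : Prop :=
  min p.1 q.1 ≤ r.1 ∧ r.1 ≤ max p.1 q.1 ∧ min p.2 q.2 ≤ r.2 ∧ r.2 ≤ max p.2 q.2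

/-- `r` lies in the open axis-parallel rectangle with opposite corners `p` and `q`. -/
def inOpenRect (p q r : Pt) : Prop :=
  min p.1 q.1 < r.1 ∧ r.1 < max p.1 q.1 ∧ min p.2 q.2 < r.2 ∧ r.2 < max p.2 q.2

/-- `S` is an arborally satisfied set. -/
def ArbSat (S : Finset Pt) : Prop :=
  ∀ p ∈ S, ∀ q ∈ S, p.1 = q.1 ∨ p.2 = q.2 ∨ ∃ r ∈ S, r ≠ p ∧ r ≠ q ∧ inRect p q r

/-- `X` is the permutation point set `{(σ(t), t) : 1 ≤ t ≤ n}` of some permutation `σ` of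
`{1, …, n}`. -/
def IsPermPointSet (n : ℕ) (X : Finset Pt) : Prop :=
  ∃ σ : Equiv.Perm (Fin n),
    X = Finset.univ.image (fun t : Fin n => ((((σ t : ℕ) : ℤ) + 1, ((t : ℕ) : ℤ) + 1) : Pt))

/-- The points added by GREEDY at time `t`, given the point set `X` and the set `G` of points
added before time `t`: for the point `p` of `X` with time `t` and each point `q` of time `< t`
with a different key such that the rectangle spanned by `p` and `q` contains no other point of
time `< t`, the point `(key q, t)` is added. -/
noncomputable def greedyStep (X G : Finset Pt) (t : ℤ) : Finset Pt :=
  (X.filter (fun p => p.2 = t)).biUnion (fun p =>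
    (((X ∪ G).filter (fun s => s.2 < t)).filter (fun q =>
      q.1 ≠ p.1 ∧ ∀ r ∈ (X ∪ G).filter (fun s => s.2 < t), inRect p q r → r = q)).image
      (fun q => ((q.1, t) : Pt)))

/-- All points added by GREEDY while processing times `1, …, t`. -/
noncomputable def greedyUpTo (X : Finset Pt) : ℕ → Finset Pt
  | 0 => ∅
  | t + 1 => greedyUpTo X t ∪ greedyStep X (greedyUpTo X t) ((t : ℤ) + 1)

/-- The set `G` of points added by GREEDY over the whole execution on a permutation point set
`X` of size `n`. -/
noncomputable def greedyG (n : ℕ) (X : Finset Pt) : Finset Pt := greedyUpTo X n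

/-- `OP r` is the point of `X` processed at the time at which `r` was added; for `r ∈ X`,
`OP r = r`. -/
noncomputable def OP (X : Finset Pt) (r : Pt) : Pt :=
  ((X.filter (fun p => p.2 = r.2)).toList).headI

/-- The first point of `S` above `p`: the point of `S` with the same key as `p`, smaller time,
and the largest such time. -/
noncomputable def firstAbove (S : Finset Pt) (p : Pt) : Pt :=
  (p.1, (((S.filter (fun q => q.1 = p.1 ∧ q.2 < p.2)).image Prod.snd).max).unbotD 0)

/-- The pair `CP(p) = (OP(p), OP(q))` where `q` is the first point of `X ∪ G` above `p`. -/
noncomputable def CP (X G : Finset Pt) (p : Pt) : Pt × Pt :=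
  (OP X p, OP X (firstAbove (X ∪ G) p))

/-- `CP(p) ∈ MMC` (*zig*). -/
def inMMC (X G : Finset Pt) (p : Pt) : Prop :=
  ((CP X G p).1.1 < p.1 ∧ (CP X G p).2.1 < (CP X G p).1.1 ∧ (CP X G p).2.2 < (CP X G p).1.2)
  ∨ (p.1 < (CP X G p).1.1 ∧ (CP X G p).1.1 < (CP X G p).2.1 ∧ (CP X G p).2.2 < (CP X G p).1.2)

/-- `CP(p) ∈ MFC` (*zag*). -/
def inMFC (X G : Finset Pt) (p : Pt) : Prop :=
  ((CP X G p).1.1 < p.1 ∧ p.1 ≤ (CP X G p).2.1 ∧ (CP X G p).2.2 < p.2)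
  ∨ (p.1 < (CP X G p).1.1 ∧ (CP X G p).2.1 ≤ p.1 ∧ (CP X G p).2.2 < p.2)

/-- A pair is good if no point of `X` lies in the open rectangle spanned by it. -/
def IsGoodPair (X : Finset Pt) (pr : Pt × Pt) : Prop :=
  ∀ r ∈ X, ¬ inOpenRect pr.1 pr.2 r

/-- `B` is a block of `X`: the set of points of `X` whose times lie in some interval, whose
keys form a set of consecutive integers; blocks are nonempty. -/
def IsBlock (X B : Finset Pt) : Prop :=
  B.Nonempty ∧ (∃ i j : ℤ, B = X.filter (fun p => i ≤ p.2 ∧ p.2 ≤ j)) ∧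
    ∃ c d : ℤ, B.image Prod.fst = Finset.Icc c d

/-- `Top(B)`: the point of `B` with the smallest time. -/
noncomputable def TopPt (B : Finset Pt) : Pt :=
  ((B.filter (fun p => ∀ q ∈ B, p.2 ≤ q.2)).toList).headI

/-- A decomposition tree of `X`: a rooted tree whose nodes are blocks of `X`, whose root is
`X`, whose leaves are exactly the singleton blocks, and in which the children of every
internal node partition it. -/
structure DecompTree (X : Finset Pt) where
  nodes : Finset (Finset Pt)
  parent : Finset Pt → Finset Pt
  isBlock_nodes : ∀ B ∈ nodes, IsBlock X B
  root_mem : X ∈ nodes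
  parent_mem : ∀ B ∈ nodes, B ≠ X → parent B ∈ nodes
  ssubset_parent : ∀ B ∈ nodes, B ≠ X → B ⊂ parent B
  leaf_iff : ∀ B ∈ nodes, (¬ ∃ C ∈ nodes, C ≠ X ∧ parent C = B) ↔ B.card = 1
  children_partition : ∀ B ∈ nodes, B.card ≠ 1 →
    ∀ x ∈ B, ∃! C, C ∈ nodes ∧ C ≠ X ∧ parent C = B ∧ x ∈ C

/-- The children of a node `B` in a decomposition tree. -/
noncomputable def DecompTree.children {X : Finset Pt} (T : DecompTree X) (B : Finset Pt) :
    Finset (Finset Pt) :=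
  T.nodes.filter (fun C => C ≠ X ∧ T.parent C = B)

/-- `X` is `k`-decomposable: it admits a decomposition tree in which every node has at most
`k` children. -/
def kDecomposable (k : ℕ) (X : Finset Pt) : Prop :=
  ∃ T : DecompTree X, ∀ B ∈ T.nodes, (T.children B).card ≤ k

/-- `RT(p)`: the node of the decomposition tree closest to the root (i.e. containing all
others) among the nodes `B` with `Top(B) = p`. -/
noncomputable def RT {X : Finset Pt} (T : DecompTree X) (p : Pt) : Finset Pt :=
  (((T.nodes.filter (fun B => TopPt B = p)).filter
      (fun B => ∀ C ∈ T.nodes, TopPt C = p → C ⊆ B)).toList).headI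

/-- The points added by GREEDY (`G`) while processing `Top(B)` that lie to the left of
`Top(B)`. -/
noncomputable def leftSet (G B : Finset Pt) : Finset Pt :=
  G.filter (fun s => s.2 = (TopPt B).2 ∧ s.1 < (TopPt B).1)

/-- `Left(B)`: among the points added by GREEDY while processing `Top(B)` with key less than
`key (Top B)`, the one with the largest key (junk if none exists). -/
noncomputable def leftPt (G B : Finset Pt) : Pt :=
  (((leftSet G B).filter (fun s => ∀ r ∈ leftSet G B, r.1 ≤ s.1)).toList).headI

/-- The points added by GREEDY (`G`) while processing `Top(B)` that lie to the right of
`Top(B)`. -/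
noncomputable def rightSet (G B : Finset Pt) : Finset Pt :=
  G.filter (fun s => s.2 = (TopPt B).2 ∧ (TopPt B).1 < s.1)

/-- `Right(B)`: among the points added by GREEDY while processing `Top(B)` with key greater
than `key (Top B)`, the one with the smallest key (junk if none exists). -/
noncomputable def rightPt (G B : Finset Pt) : Pt :=
  (((rightSet G B).filter (fun s => ∀ r ∈ rightSet G B, s.1 ≤ r.1)).toList).headI

/-- The amortised estimate for one side of an access: along a chain ordered by `κ`, the logarithms
of the new sizes are dominated by shifted logarithms of the old sizes, each step gaining `2`. -/
theorem sum_logb_new_le {ι : Type*} (κ : ι → ℤ) (d old new : ι → ℝ) (M : ℝ) (T : Finset ι)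
    (hκ : ∀ x ∈ T, ∀ y ∈ T, κ x = κ y → x = y)
    (hd : ∀ x ∈ T, 1 ≤ d x) (hdM : ∀ x ∈ T, d x ≤ M) (hold : ∀ x ∈ T, d x ≤ old x)
    (hnew : ∀ x ∈ T, 1 ≤ new x) (hnewM : ∀ x ∈ T, new x ≤ M) (hM : 1 ≤ M)
    (hmid : ∀ y ∈ T, ∀ x ∈ T, ∀ z ∈ T, κ y < κ x → κ x < κ z → new x ≤ d z - d y) :
    ∑ x ∈ T, Real.logb 2 (new x) + 2 * (#T : ℝ) ≤
      ∑ x ∈ T, Real.logb 2 (old x) + 4 + 4 * Real.logb 2 M := by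
  have two : (1 : ℝ) < 2 := by norm_num
  have key : ∀ s : Finset ι, s ⊆ T → ∀ w ∈ s, ∀ z ∈ s, κ w < κ z →
      (∀ x ∈ s, x = z ∨ κ x ≤ κ w) →
      ∑ x ∈ s.erase z, Real.logb 2 (new x) + 2 * (#s : ℝ) ≤
        Real.logb 2 M + ∑ x ∈ s, Real.logb 2 (old x) + 4 + Real.logb 2 (d z)
          + Real.logb 2 (d w) := by
    intro s
    induction s using Finset.induction_on_max_value κ with
    | empty => simp
    | insert a s has hmax ih =>
      intro hsT w hw z hz hwz htop
      have haT : a ∈ T := hsT (mem_insert_self a s)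
      have hs : s ⊆ T := fun x hx => hsT (mem_insert_of_mem hx)
      have hza : z = a := by
        rcases mem_insert.1 hz with h | h
        · exact h
        · have h1 := hmax z h
          rcases htop a (mem_insert_self a s) with h2 | h2
          · exact h2.symm
          · omega
      subst hza
      have hws : w ∈ s := by
        rcases mem_insert.1 hw with h | h
        · subst h; omega
        · exact h
      rw [erase_insert has, sum_insert has, card_insert_of_notMem has]
      have hwT := hs hws
      have lognn : ∀ x ∈ T, 0 ≤ Real.logb 2 (d x) := fun x hx => Real.logb_nonneg two (hd x hx)
      have logdo : ∀ x ∈ T, Real.logb 2 (d x) ≤ Real.logb 2 (old x) := fun x hx =>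
        Real.logb_le_logb_of_le two (by linarith [hd x hx]) (hold x hx)
      have logM : ∀ x ∈ T, Real.logb 2 (new x) ≤ Real.logb 2 M := fun x hx =>
        Real.logb_le_logb_of_le two (by linarith [hnew x hx]) (hnewM x hx)
      rcases (s.erase w).eq_empty_or_nonempty with he | hne
      · have hsw : s = {w} := by
          ext x
          rw [mem_singleton]
          constructor
          · intro hx
            by_contra hne
            have : x ∈ s.erase w := mem_erase.2 ⟨hne, hx⟩
            simp [he] at this
          · rintro rfl; exact hws
        subst hsw
        simp only [sum_singleton, card_singleton]
        push_cast
        linarith [lognn w hwT, lognn z haT, logdo w hwT, logdo z haT, logM w hwT]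
      · obtain ⟨v, hv, hvmax⟩ := exists_max_image (s.erase w) κ hne
        obtain ⟨hvw, hvs⟩ := mem_erase.1 hv
        have hvlt : κ v < κ w := by
          have : κ v ≤ κ w := by
            rcases htop v (mem_insert_of_mem hvs) with h | h
            · subst h; exact absurd hvs has
            · exact h
          rcases this.lt_or_eq with h | h
          · exact h
          · exact absurd (hκ v (hs hvs) w hwT h) hvw
        have h := ih hs v hvs w hws hvlt (fun x hx => by
          by_cases hxw : x = w
          · exact Or.inl hxw
          · exact Or.inr (hvmax x (mem_erase.2 ⟨hxw, hx⟩)))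
        rw [← add_sum_erase s _ hws]
        have hvT := hs hvs
        have h1 := hmid v hvT w hwT z haT hvlt hwz
        have hnw := hnew w hwT
        have hdv := hd v hvT
        have hdz := hd z haT
        have amgm : Real.logb 2 (new w) + Real.logb 2 (d v) + 2 ≤ 2 * Real.logb 2 (d z) := by
          have e1 : Real.logb 2 (new w) + Real.logb 2 (d v) + 2
              = Real.logb 2 (new w * d v * 4) := by
            rw [Real.logb_mul (by positivity) (by norm_num), Real.logb_mul (by positivity)
              (by positivity)]
            have : Real.logb 2 (4 : ℝ) = 2 := by
              rw [show (4 : ℝ) = 2 ^ (2 : ℕ) by norm_num, Real.logb_pow]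
              simp
            rw [this]
          have e2 : 2 * Real.logb 2 (d z) = Real.logb 2 (d z ^ 2) := by
            rw [Real.logb_pow]; simp
          rw [e1, e2]
          apply Real.logb_le_logb_of_le two (by positivity)
          nlinarith [sq_nonneg (d z - 2 * d v)]
        push_cast
        linarith [logdo z haT]
  have logM : ∀ x ∈ T, Real.logb 2 (new x) ≤ Real.logb 2 M := fun x hx =>
    Real.logb_le_logb_of_le two (by linarith [hnew x hx]) (hnewM x hx)
  have lognn : ∀ x ∈ T, 0 ≤ Real.logb 2 (old x) := fun x hx =>
    Real.logb_nonneg two ((hd x hx).trans (hold x hx))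
  have hlM : 0 ≤ Real.logb 2 M := Real.logb_nonneg two hM
  rcases T.eq_empty_or_nonempty with rfl | hne
  · simp; positivity
  obtain ⟨z, hz, hzmax⟩ := exists_max_image T κ hne
  rw [← add_sum_erase T (fun x => Real.logb 2 (new x)) hz]
  rcases (T.erase z).eq_empty_or_nonempty with he | hne'
  · have hc : #T = 1 := by
      have := card_erase_of_mem hz
      rw [he, card_empty] at this
      have := card_pos.2 hne
      omega
    rw [he, hc]
    have := sum_nonneg lognn
    simp only [sum_empty]
    push_cast
    linarith [logM z hz]
  · obtain ⟨w, hw, hwmax⟩ := exists_max_image (T.erase z) κ hne'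
    obtain ⟨hwz, hwT⟩ := mem_erase.1 hw
    have hlt : κ w < κ z := by
      rcases (hzmax w hwT).lt_or_eq with h | h
      · exact h
      · exact absurd (hκ w hwT z hz h) hwz
    have h := key T subset_rfl w hwT z hz hlt (fun x hx => by
      by_cases hxw : x = z
      · exact Or.inl hxw
      · exact Or.inr (hwmax x (mem_erase.2 ⟨hxw, hx⟩)))
    have hb : ∀ x ∈ T, Real.logb 2 (d x) ≤ Real.logb 2 M := fun x hx =>
      Real.logb_le_logb_of_le two (by linarith [hd x hx]) (hdM x hx)
    linarith [hb z hz, hb w hwT, logM z hz]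

/-- Every element of `E` other than `y` between `j` and `y` in the order given by `κ` has a
smaller value of `ρ` than `y`. -/
def Visible {ι α : Type*} [LinearOrder α] (κ : ι → ℤ) (E : Finset ι) (ρ : ι → α) (y j : ι) :
    Prop :=
  ∀ z ∈ E, z ≠ y → min (κ j) (κ y) ≤ κ z → κ z ≤ max (κ j) (κ y) → ρ z < ρ y

/-- The elements of `U` from which `y` is visible. -/
noncomputable def nbhd {ι α : Type*} [LinearOrder α] (κ : ι → ℤ) (U E : Finset ι) (ρ : ι → α)
    (y : ι) : Finset ι :=
  U.filter (Visible κ E ρ y)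

/-- The potential of a configuration. -/
noncomputable def potential {ι α : Type*} [LinearOrder α] (κ : ι → ℤ) (U E : Finset ι)
    (ρ : ι → α) : ℝ :=
  ∑ y ∈ E, Real.logb 2 (#(nbhd κ U E ρ y) : ℝ)

theorem one_side {ι : Type*} (κ : ι → ℤ) (U T : Finset ι) (a : ι) (old new : ι → Finset ι)
    (hκ : ∀ x ∈ T, ∀ y ∈ T, κ x = κ y → x = y) (hTU : T ⊆ U) (hU : U.Nonempty)
    (ha : ∀ x ∈ T, κ a < κ x) (hself : ∀ x ∈ T, x ∈ new x) (hnewU : ∀ x ∈ T, new x ⊆ U)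
    (hold : ∀ x ∈ T, U.filter (fun j => κ a < κ j ∧ κ j ≤ κ x) ⊆ old x)
    (hmid : ∀ y ∈ T, ∀ x ∈ T, ∀ z ∈ T, κ y < κ x → κ x < κ z →
      ∀ j ∈ new x, κ y < κ j ∧ κ j < κ z) :
    ∑ x ∈ T, Real.logb 2 (#(new x) : ℝ) + 2 * (#T : ℝ) ≤
      ∑ x ∈ T, Real.logb 2 (#(old x) : ℝ) + 4 + 4 * Real.logb 2 (#U : ℝ) := by
  refine sum_logb_new_le κ (fun x => (#(U.filter (fun j => κ a < κ j ∧ κ j ≤ κ x)) : ℝ))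
    _ _ _ T hκ ?_ ?_ ?_ ?_ ?_ ?_ ?_
  · intro x hx
    have : 0 < #(U.filter (fun j => κ a < κ j ∧ κ j ≤ κ x)) :=
      card_pos.2 ⟨x, mem_filter.2 ⟨hTU hx, ha x hx, le_rfl⟩⟩
    exact_mod_cast this
  · intro x hx
    exact_mod_cast card_filter_le _ _
  · intro x hx
    exact_mod_cast card_le_card (hold x hx)
  · intro x hx
    exact_mod_cast card_pos.2 ⟨x, hself x hx⟩
  · intro x hx
    exact_mod_cast card_le_card (hnewU x hx)
  · exact_mod_cast card_pos.2 hU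
  · intro y hy x hx z hz hyx hxz
    have hdisj : Disjoint (new x) (U.filter (fun j => κ a < κ j ∧ κ j ≤ κ y)) := by
      rw [disjoint_left]
      intro j hj hj'
      have := hmid y hy x hx z hz hyx hxz j hj
      have := (mem_filter.1 hj').2
      omega
    have hsub : new x ∪ U.filter (fun j => κ a < κ j ∧ κ j ≤ κ y) ⊆
        U.filter (fun j => κ a < κ j ∧ κ j ≤ κ z) := by
      intro j hj
      rcases mem_union.1 hj with hj | hj
      · have h1 := hmid y hy x hx z hz hyx hxz j hj
        have h2 := ha y hy
        exact mem_filter.2 ⟨hnewU x hx hj, by omega, by omega⟩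
      · obtain ⟨h0, h1, h2⟩ := mem_filter.1 hj
        exact mem_filter.2 ⟨h0, h1, by omega⟩
    have := card_le_card hsub
    rw [card_union_of_disjoint hdisj] at this
    have h : (#(new x) : ℝ) + #(U.filter (fun j => κ a < κ j ∧ κ j ≤ κ y)) ≤
      #(U.filter (fun j => κ a < κ j ∧ κ j ≤ κ z)) := by exact_mod_cast this
    linarith

/-- The amortised cost of one access. -/
theorem potential_step {ι α : Type*} [DecidableEq ι] [LinearOrder α] (κ : ι → ℤ) (U E T : Finset ι) (a : ι)
    (ρ ρ' : ι → α) (b : α)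
    (hκ : ∀ x ∈ U, ∀ y ∈ U, κ x = κ y → x = y) (hEU : E ⊆ U) (haU : a ∈ U) (haE : a ∉ E)
    (hTE : T ⊆ E)
    (hvis : ∀ x ∈ T, ∀ z ∈ E, z ≠ x → min (κ a) (κ x) ≤ κ z → κ z ≤ max (κ a) (κ x) → ρ z < ρ x)
    (hmono : ∀ z ∈ E, ρ z ≤ ρ' z) (hunt : ∀ z ∈ E, z ∉ T → ρ' z = ρ z)
    (hge : ∀ z ∈ T, b ≤ ρ' z)
    (hle : ∀ x ∈ T, ∀ z ∈ T, min (κ a) (κ x) < κ z → κ z < max (κ a) (κ x) → ρ' x ≤ b) :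
    2 * (#T : ℝ) + potential κ U (insert a E) ρ' ≤
      potential κ U E ρ + 8 + 9 * Real.logb 2 (#U : ℝ) := by
  have two : (1 : ℝ) < 2 := by norm_num
  have hTU : T ⊆ U := hTE.trans hEU
  have hself : ∀ (E' : Finset ι) (σ : ι → α), E' ⊆ U → ∀ x ∈ U, x ∈ nbhd κ U E' σ x := by
    intro E' σ hE' x hx
    refine mem_filter.2 ⟨hx, fun z hz hzx h1 h2 => absurd (hκ z (hE' hz) x hx ?_) hzx⟩
    omega
  have haEU : insert a E ⊆ U := insert_subset haU hEU
  have hpos : ∀ (E' : Finset ι) (σ : ι → α), E' ⊆ U → ∀ x ∈ U,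
      (0 : ℝ) < #(nbhd κ U E' σ x) := by
    intro E' σ hE' x hx
    exact_mod_cast card_pos.2 ⟨x, hself E' σ hE' x hx⟩
  have hκa : ∀ x ∈ T, κ x ≠ κ a := fun x hx h =>
    haE (hκ x (hTU hx) a haU h ▸ hTE hx)
  have hmid : ∀ y ∈ T, ∀ x ∈ T, ∀ z ∈ T, κ y < κ x → κ x < κ z →
      (κ a < κ y ∨ κ z < κ a) → ∀ j ∈ nbhd κ U (insert a E) ρ' x, κ y < κ j ∧ κ j < κ z := by
    intro y hy x hx z hz hyx hxz hside j hj
    have hjv := (mem_filter.1 hj).2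
    have hxb : ρ' x ≤ b := by
      rcases hside with h | h
      · exact hle x hx y hy (by omega) (by omega)
      · exact hle x hx z hz (by omega) (by omega)
    constructor
    · by_contra hcon
      have := hjv y (mem_insert_of_mem (hTE hy)) (by rintro rfl; omega) (by omega) (by omega)
      exact absurd (hge y hy) (not_le.2 (this.trans_le hxb))
    · by_contra hcon
      have := hjv z (mem_insert_of_mem (hTE hz)) (by rintro rfl; omega) (by omega) (by omega)
      exact absurd (hge z hz) (not_le.2 (this.trans_le hxb))
  have hold : ∀ x ∈ T, ∀ j ∈ U, min (κ a) (κ x) ≤ κ j → κ j ≤ max (κ a) (κ x) →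
      j ∈ nbhd κ U E ρ x := by
    intro x hx j hj h1 h2
    exact mem_filter.2 ⟨hj, fun z hz hzx h3 h4 => hvis x hx z hz hzx (by omega) (by omega)⟩
  have hR := one_side κ U (T.filter (fun x => κ a < κ x)) a (nbhd κ U E ρ)
    (nbhd κ U (insert a E) ρ')
    (fun x hx y hy => hκ x (hTU (mem_filter.1 hx).1) y (hTU (mem_filter.1 hy).1))
    ((filter_subset _ _).trans hTU) ⟨a, haU⟩ (fun x hx => (mem_filter.1 hx).2)
    (fun x hx => hself _ _ haEU x (hTU (mem_filter.1 hx).1)) (fun x _ => filter_subset _ _)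
    (fun x hx j hj => by
      obtain ⟨h0, h1, h2⟩ := mem_filter.1 hj
      exact hold x (mem_filter.1 hx).1 j h0 (by omega) (by omega))
    (fun y hy x hx z hz h1 h2 => hmid y (mem_filter.1 hy).1 x (mem_filter.1 hx).1 z
      (mem_filter.1 hz).1 h1 h2 (Or.inl (mem_filter.1 hy).2))
  have hL := one_side (fun x => - κ x) U (T.filter (fun x => ¬ κ a < κ x)) a (nbhd κ U E ρ)
    (nbhd κ U (insert a E) ρ')
    (fun x hx y hy h => hκ x (hTU (mem_filter.1 hx).1) y (hTU (mem_filter.1 hy).1)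
      (neg_injective h))
    ((filter_subset _ _).trans hTU) ⟨a, haU⟩
    (fun x hx => by
      have h1 := (mem_filter.1 hx).2
      have h2 := hκa x (mem_filter.1 hx).1
      show - κ a < - κ x
      omega)
    (fun x hx => hself _ _ haEU x (hTU (mem_filter.1 hx).1)) (fun x _ => filter_subset _ _)
    (fun x hx j hj => by
      obtain ⟨h0, h1, h2⟩ := mem_filter.1 hj
      exact hold x (mem_filter.1 hx).1 j h0 (by omega) (by omega))
    (fun y hy x hx z hz h1 h2 j hj => by
      have h3 := (mem_filter.1 hy).2
      have h4 := hκa y (mem_filter.1 hy).1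
      have := hmid z (mem_filter.1 hz).1 x (mem_filter.1 hx).1 y
        (mem_filter.1 hy).1 (by omega) (by omega) (Or.inr (by omega)) j hj
      constructor <;> omega)
  have hcard : (#(T.filter (fun x => κ a < κ x)) : ℝ) + #(T.filter (fun x => ¬ κ a < κ x)) = #T := by
    exact_mod_cast card_filter_add_card_filter_not (s := T) (fun x => κ a < κ x)
  have hsplit : ∀ f : ι → ℝ, ∑ x ∈ T.filter (fun x => κ a < κ x), f x +
      ∑ x ∈ T.filter (fun x => ¬ κ a < κ x), f x = ∑ x ∈ T, f x :=
    fun f => sum_filter_add_sum_filter_not T _ f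
  have hsdiff : ∀ f : ι → ℝ, ∑ x ∈ E \ T, f x + ∑ x ∈ T, f x = ∑ x ∈ E, f x :=
    fun f => sum_sdiff hTE
  have hrest : ∑ x ∈ E \ T, Real.logb 2 (#(nbhd κ U (insert a E) ρ' x) : ℝ) ≤
      ∑ x ∈ E \ T, Real.logb 2 (#(nbhd κ U E ρ x) : ℝ) := by
    refine sum_le_sum fun x hx => ?_
    obtain ⟨hxE, hxT⟩ := mem_sdiff.1 hx
    refine Real.logb_le_logb_of_le two (hpos _ _ haEU x (hEU hxE)) ?_
    refine Nat.cast_le.2 (card_le_card fun j hj => ?_)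
    obtain ⟨hjU, hj⟩ := mem_filter.1 hj
    refine mem_filter.2 ⟨hjU, fun z hz hzx h1 h2 => ?_⟩
    have := hj z (mem_insert_of_mem hz) hzx h1 h2
    rw [hunt x hxE hxT] at this
    exact (hmono z hz).trans_lt this
  have hnew : Real.logb 2 (#(nbhd κ U (insert a E) ρ' a) : ℝ) ≤ Real.logb 2 (#U : ℝ) :=
    Real.logb_le_logb_of_le two (hpos _ _ haEU a haU)
      (Nat.cast_le.2 (card_le_card (filter_subset _ _)))
  unfold potential
  rw [sum_insert haE]
  have s1 := hsplit (fun x => Real.logb 2 (#(nbhd κ U (insert a E) ρ' x) : ℝ))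
  have s2 := hsplit (fun x => Real.logb 2 (#(nbhd κ U E ρ x) : ℝ))
  have s3 := hsdiff (fun x => Real.logb 2 (#(nbhd κ U (insert a E) ρ' x) : ℝ))
  have s4 := hsdiff (fun x => Real.logb 2 (#(nbhd κ U E ρ x) : ℝ))
  linarith

/-- `X` has distinct keys and distinct times, and `G` is the set of points added by GREEDY. -/
structure IsGreedy (X G : Finset Pt) : Prop where
  key_inj : ∀ p ∈ X, ∀ q ∈ X, p.1 = q.1 → p = q
  time_inj : ∀ p ∈ X, ∀ q ∈ X, p.2 = q.2 → p = q
  mem_iff : ∀ r, r ∈ G ↔ ∃ p ∈ X, p.2 = r.2 ∧ ∃ q ∈ X ∪ G, q.2 < r.2 ∧ q.1 = r.1 ∧ q.1 ≠ p.1 ∧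
    ∀ w ∈ X ∪ G, w.2 < r.2 → inRect p q w → w = q

/-- A nonempty part of `X` that is convex in `X` both in time and in key. -/
structure IsBox (X B : Finset Pt) : Prop where
  nonempty : B.Nonempty
  subset : B ⊆ X
  time_convex : ∀ p ∈ X, ∀ q ∈ B, ∀ r ∈ B, q.2 ≤ p.2 → p.2 ≤ r.2 → p ∈ B
  key_convex : ∀ p ∈ X, ∀ q ∈ B, ∀ r ∈ B, q.1 ≤ p.1 → p.1 ≤ r.1 → p ∈ B

theorem TopPt_spec {B : Finset Pt} (hB : B.Nonempty) :
    TopPt B ∈ B ∧ ∀ q ∈ B, (TopPt B).2 ≤ q.2 := by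
  obtain ⟨p, hp, hmin⟩ := exists_min_image B Prod.snd hB
  have hne : ((B.filter (fun p => ∀ q ∈ B, p.2 ≤ q.2)).toList) ≠ [] := by
    intro h
    rw [Finset.toList_eq_nil] at h
    have : p ∈ B.filter (fun p => ∀ q ∈ B, p.2 ≤ q.2) := mem_filter.2 ⟨hp, hmin⟩
    rw [h] at this
    simp at this
  have hmem : TopPt B ∈ B.filter (fun p => ∀ q ∈ B, p.2 ≤ q.2) := by
    rw [← Finset.mem_toList]
    unfold TopPt
    cases hl : (B.filter (fun p => ∀ q ∈ B, p.2 ≤ q.2)).toList with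
    | nil => exact absurd hl hne
    | cons x l => simp
  exact mem_filter.1 hmem

namespace IsGreedy

variable {X G : Finset Pt}

/-- Every touched key has been inserted strictly before. -/
theorem exists_origin (h : IsGreedy X G) {r : Pt} (hr : r ∈ G) :
    ∃ x ∈ X, x.1 = r.1 ∧ x.2 < r.2 := by
  have hne : ((X ∪ G).filter (fun w => w.1 = r.1)).Nonempty :=
    ⟨r, mem_filter.2 ⟨mem_union_right _ hr, rfl⟩⟩
  obtain ⟨x, hx, hmin⟩ := exists_min_image _ Prod.snd hne
  obtain ⟨hxS, hx1⟩ := mem_filter.1 hx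
  obtain ⟨p, -, -, q, hq, hqt, hqk, -⟩ := (h.mem_iff r).1 hr
  have hxq := hmin q (mem_filter.2 ⟨hq, hqk⟩)
  rcases mem_union.1 hxS with hxX | hxG
  · exact ⟨x, hxX, hx1, by omega⟩
  · obtain ⟨p', -, -, q', hq', hqt', hqk', -⟩ := (h.mem_iff x).1 hxG
    have := hmin q' (mem_filter.2 ⟨hq', by omega⟩)
    omega

theorem exists_origin_le (h : IsGreedy X G) {r : Pt} (hr : r ∈ X ∪ G) :
    ∃ x ∈ X, x.1 = r.1 ∧ x.2 ≤ r.2 := by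
  rcases mem_union.1 hr with hr | hr
  · exact ⟨r, hr, rfl, le_rfl⟩
  · obtain ⟨x, hx, h1, h2⟩ := h.exists_origin hr
    exact ⟨x, hx, h1, h2.le⟩

theorem exists_access (h : IsGreedy X G) {r : Pt} (hr : r ∈ X ∪ G) : ∃ p ∈ X, p.2 = r.2 := by
  rcases mem_union.1 hr with hr | hr
  · exact ⟨r, hr, rfl⟩
  · obtain ⟨p, hp, hpt, -⟩ := (h.mem_iff r).1 hr
    exact ⟨p, hp, hpt⟩

/-- The nearest inserted key on either side is always touched. -/
theorem neighbor_mem (h : IsGreedy X G) {p y : Pt} (hp : p ∈ X) (hy : y ∈ X) (hyp : y.2 < p.2)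
    (hnear : ∀ z ∈ X, z.2 < p.2 → min y.1 p.1 < z.1 → z.1 < max y.1 p.1 → False) :
    (y.1, p.2) ∈ G := by
  have hne : ((X ∪ G).filter (fun w => w.1 = y.1 ∧ w.2 < p.2)).Nonempty :=
    ⟨y, mem_filter.2 ⟨mem_union_left _ hy, rfl, hyp⟩⟩
  obtain ⟨q, hq, hmax⟩ := exists_max_image _ Prod.snd hne
  obtain ⟨hqS, hq1, hq2⟩ := mem_filter.1 hq
  have hkey : y.1 ≠ p.1 := fun hk => by
    have := h.key_inj y hy p hp hk
    subst this
    omega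
  refine (h.mem_iff _).2 ⟨p, hp, rfl, q, hqS, hq2, hq1, by omega, ?_⟩
  intro w hw hwt hrect
  obtain ⟨r1, r2, r3, r4⟩ := hrect
  dsimp only at hwt
  obtain ⟨x, hx, hx1, hx2⟩ := h.exists_origin_le hw
  have hwp : w.1 ≠ p.1 := fun hk => by
    have := h.key_inj x hx p hp (by omega)
    subst this
    omega
  have hwy : w.1 = y.1 := by
    by_contra hne
    exact hnear x hx (by omega) (by omega) (by omega)
  have := hmax w (mem_filter.2 ⟨hw, hwy, hwt⟩)
  exact Prod.ext (by omega) (by omega)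

/-- During the time of a box `B` but after its first access, the only keys touched outside `B` are
the neighbours of `B` among the keys inserted before `B`. -/
theorem no_between (h : IsGreedy X G) {B : Finset Pt} (hB : IsBox X B) {p r : Pt} (hp : p ∈ B)
    (htop : (TopPt B).2 < p.2) (hr : r ∈ G) (hrt : r.2 = p.2) (hrB : ∀ b ∈ B, b.1 ≠ r.1) :
    ∀ y ∈ X, y.2 < (TopPt B).2 → min r.1 (TopPt B).1 < y.1 → y.1 < max r.1 (TopPt B).1 →
      False := by
  intro y hy hyt hy1 hy2
  obtain ⟨hsB, hsmin⟩ := TopPt_spec hB.nonempty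
  set s := TopPt B with hs
  have hsX := hB.subset hsB
  have hne : (X.filter (fun w => w.2 < s.2 ∧ min r.1 s.1 < w.1 ∧ w.1 < max r.1 s.1)).Nonempty :=
    ⟨y, mem_filter.2 ⟨hy, hyt, hy1, hy2⟩⟩
  obtain ⟨z, hz, hzmin⟩ := exists_min_image _ (fun w => (w.1 - s.1).natAbs) hne
  obtain ⟨hzX, hzt, hz1, hz2⟩ := mem_filter.1 hz
  have hzG : (z.1, s.2) ∈ G := by
    refine h.neighbor_mem hsX hzX hzt ?_
    intro w hw hwt hw1 hw2
    have := hzmin w (mem_filter.2 ⟨hw, hwt, by omega, by omega⟩)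
    omega
  have hzB : z ∉ B := fun hzB => by have := hsmin z hzB; omega
  have hne' : (G.filter (fun w => w.1 = r.1 ∧ s.2 < w.2 ∧ w.2 ≤ p.2)).Nonempty :=
    ⟨r, mem_filter.2 ⟨hr, rfl, by omega, by omega⟩⟩
  obtain ⟨u, hu, humin⟩ := exists_min_image _ Prod.snd hne'
  obtain ⟨huG, hu1, hu2, hu3⟩ := mem_filter.1 hu
  obtain ⟨p', hp', hpt', q, hq, hqt, hqk, hqp, hemp⟩ := (h.mem_iff u).1 huG
  have hpB' : p' ∈ B := hB.time_convex p' hp' s hsB p hp (by omega) (by omega)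
  have hqs : q.2 ≤ s.2 := by
    by_contra hcon
    rcases mem_union.1 hq with hqX | hqG
    · exact hrB q (hB.time_convex q hqX s hsB p hp (by omega) (by omega)) (by omega)
    · have := humin q (mem_filter.2 ⟨hqG, by omega, by omega, by omega⟩)
      omega
  have hzp1 : ¬ (p'.1 ≤ z.1 ∧ z.1 ≤ s.1) := fun hc =>
    hzB (hB.key_convex z hzX p' hpB' s hsB hc.1 hc.2)
  have hzp2 : ¬ (s.1 ≤ z.1 ∧ z.1 ≤ p'.1) := fun hc =>
    hzB (hB.key_convex z hzX s hsB p' hpB' hc.1 hc.2)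
  have := hemp (z.1, s.2) (mem_union_right _ hzG) hu2 ⟨by dsimp only; omega, by dsimp only; omega,
    by dsimp only; omega, by dsimp only; omega⟩
  have := congrArg Prod.fst this
  dsimp only at this
  omega

/-- A key outside the box `B` touched during the time of `B` is also touched by the first access
in `B`. -/
theorem mem_at_top (h : IsGreedy X G) {B : Finset Pt} (hB : IsBox X B) {p r : Pt} (hp : p ∈ B)
    (htop : (TopPt B).2 < p.2) (hr : r ∈ G) (hrt : r.2 = p.2) (hrB : ∀ b ∈ B, b.1 ≠ r.1) :
    (r.1, (TopPt B).2) ∈ G := by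
  obtain ⟨hsB, -⟩ := TopPt_spec hB.nonempty
  obtain ⟨x, hx, hx1, hx2⟩ := h.exists_origin hr
  have hxs : x.2 < (TopPt B).2 := by
    by_contra hcon
    exact hrB x (hB.time_convex x hx _ hsB p hp (by omega) (by omega)) hx1
  rw [← hx1]
  refine h.neighbor_mem (hB.subset hsB) hx hxs ?_
  rw [hx1]
  exact h.no_between hB hp htop hr hrt hrB

/-- A key of a finished box that is touched together with a smaller and a larger key of the box
is never touched again. -/
theorem not_touched_after (h : IsGreedy X G) {C : Finset Pt} (hC : IsBox X C) {t x : ℤ} {y z : Pt}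
    (hy : y ∈ C) (hz : z ∈ C) (hCt : ∀ c ∈ C, c.2 < t) (hyG : (y.1, t) ∈ G) (hxG : (x, t) ∈ G)
    (hzG : (z.1, t) ∈ G) (hyx : y.1 < x) (hxz : x < z.1) :
    ∀ r ∈ G, r.1 = x → ¬ t < r.2 := by
  intro r hr hrx hrt
  have hne : (G.filter (fun w => w.1 = x ∧ t < w.2)).Nonempty :=
    ⟨r, mem_filter.2 ⟨hr, hrx, hrt⟩⟩
  obtain ⟨u, hu, humin⟩ := exists_min_image _ Prod.snd hne
  obtain ⟨huG, hu1, hu2⟩ := mem_filter.1 hu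
  obtain ⟨p, hp, hpt, q, hq, hqt, hqk, hqp, hemp⟩ := (h.mem_iff u).1 huG
  have hpC : p ∉ C := fun hc => by have := hCt p hc; omega
  have hside : ¬ (y.1 ≤ p.1 ∧ p.1 ≤ z.1) := fun hc =>
    hpC (hC.key_convex p hp y hy z hz hc.1 hc.2)
  have hqt' : q.2 ≤ t := by
    by_contra hcon
    rcases mem_union.1 hq with hqX | hqG
    · obtain ⟨x', hx', hx1, hx2⟩ := h.exists_origin hxG
      have := h.key_inj x' hx' q hqX (by dsimp only at hx1; omega)
      subst this
      dsimp only at hx2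
      omega
    · have := humin q (mem_filter.2 ⟨hqG, by omega, by omega⟩)
      omega
  by_cases hc : p.1 < y.1
  · have := congrArg Prod.fst (hemp (y.1, t) (mem_union_right _ hyG) hu2
      ⟨by dsimp only; omega, by dsimp only; omega, by dsimp only; omega, by dsimp only; omega⟩)
    dsimp only at this
    omega
  · have := congrArg Prod.fst (hemp (z.1, t) (mem_union_right _ hzG) hu2
      ⟨by dsimp only; omega, by dsimp only; omega, by dsimp only; omega, by dsimp only; omega⟩)
    dsimp only at this
    omega

end IsGreedy

/-- `𝒞` is a partition of the box `B` into boxes. -/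
structure IsBoxPartition (X B : Finset Pt) (𝒞 : Finset (Finset Pt)) : Prop where
  box : IsBox X B
  part_box : ∀ C ∈ 𝒞, IsBox X C
  part_subset : ∀ C ∈ 𝒞, C ⊆ B
  cover : ∀ p ∈ B, ∃ C ∈ 𝒞, p ∈ C
  eq_of_mem : ∀ C ∈ 𝒞, ∀ D ∈ 𝒞, ∀ p, p ∈ C → p ∈ D → C = D

/-- The last time before `τ` at which some key of `C` was touched. -/
noncomputable def lastTouch (S : Finset Pt) (τ : ℤ) (C : Finset Pt) : WithBot ℤ :=
  (S.filter (fun r => r.2 < τ ∧ ∃ x ∈ C, x.1 = r.1)).sup (fun r => (r.2 : WithBot ℤ))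

/-- The members of `𝒞` containing a key touched at time `t`. -/
noncomputable def touchedParts (G : Finset Pt) (𝒞 : Finset (Finset Pt)) (t : ℤ) :
    Finset (Finset Pt) :=
  𝒞.filter (fun C => ∃ r ∈ G, r.2 = t ∧ ∃ x ∈ C, x.1 = r.1)

/-- The points added at time `t` whose key is touched again later. -/
noncomputable def nonfinal (G : Finset Pt) (t : ℤ) : Finset Pt :=
  G.filter (fun r => r.2 = t ∧ ∃ r' ∈ G, r'.1 = r.1 ∧ t < r'.2)

theorem IsBox.key_lt {X C D : Finset Pt} (hC : IsBox X C) (hD : IsBox X D)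
    (hdisj : ∀ p ∈ C, p ∉ D) {c d c' d' : Pt} (hc : c ∈ C) (hd : d ∈ D) (hc' : c' ∈ C)
    (hd' : d' ∈ D) (hlt : c.1 < d.1) : c'.1 < d'.1 := by
  by_contra hcon
  by_cases h : c.1 ≤ d'.1
  · exact hdisj d' (hC.key_convex d' (hD.subset hd') c hc c' hc' h (by omega)) hd'
  · exact hdisj c hc (hD.key_convex c (hC.subset hc) d' hd' d hd (by omega) (by omega))

theorem IsBox.time_lt {X C D : Finset Pt} (hC : IsBox X C) (hD : IsBox X D)
    (hdisj : ∀ p ∈ C, p ∉ D) (hle : (TopPt C).2 ≤ (TopPt D).2) :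
    ∀ c ∈ C, c.2 < (TopPt D).2 := by
  intro c hc
  by_contra hcon
  have hD' := (TopPt_spec hD.nonempty).1
  exact hdisj _ (hC.time_convex _ (hD.subset hD') _ (TopPt_spec hC.nonempty).1 c hc hle
    (by omega)) hD'

namespace IsBoxPartition

variable {X G B : Finset Pt} {𝒞 : Finset (Finset Pt)}

theorem disjoint (hP : IsBoxPartition X B 𝒞) {C D : Finset Pt} (hC : C ∈ 𝒞) (hD : D ∈ 𝒞)
    (hne : C ≠ D) : ∀ p ∈ C, p ∉ D :=
  fun p hpC hpD => hne (hP.eq_of_mem C hC D hD p hpC hpD)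

theorem top_key_inj (h : IsGreedy X G) (hP : IsBoxPartition X B 𝒞) :
    ∀ C ∈ 𝒞, ∀ D ∈ 𝒞, (TopPt C).1 = (TopPt D).1 → C = D := by
  intro C hC D hD heq
  have h1 := (TopPt_spec (hP.part_box C hC).nonempty).1
  have h2 := (TopPt_spec (hP.part_box D hD).nonempty).1
  have := h.key_inj _ ((hP.part_box C hC).subset h1) _ ((hP.part_box D hD).subset h2) heq
  exact hP.eq_of_mem C hC D hD _ h1 (this ▸ h2)

/-- The change of the potential while the accesses in the part `D` are processed. -/
theorem potential_part (h : IsGreedy X G) (hP : IsBoxPartition X B 𝒞) {s : Finset (Finset Pt)}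
    {D : Finset Pt} {τ : ℤ} (hs : s ⊆ 𝒞) (hD : D ∈ 𝒞) (hDs : D ∉ s)
    (hbefore : ∀ C ∈ s, ∀ c ∈ C, c.2 < (TopPt D).2)
    (hbefore' : ∀ C ∈ 𝒞, ∀ c ∈ C, c.2 < (TopPt D).2 → C ∈ s)
    (hτ : (TopPt D).2 < τ) (hduring : ∀ p ∈ X, (TopPt D).2 ≤ p.2 → p.2 < τ → p ∈ D) :
    2 * (#(touchedParts G 𝒞 (TopPt D).2) : ℝ) +
        potential (fun C => (TopPt C).1) 𝒞 (insert D s) (lastTouch (X ∪ G) τ) ≤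
      potential (fun C => (TopPt C).1) 𝒞 s (lastTouch (X ∪ G) (TopPt D).2) + 8 +
        9 * Real.logb 2 (#𝒞 : ℝ) := by
  have hDbox := hP.part_box D hD
  obtain ⟨hDtop, hDmin⟩ := TopPt_spec hDbox.nonempty
  have hTs : touchedParts G 𝒞 (TopPt D).2 ⊆ s := by
    intro C hC
    obtain ⟨hC𝒞, r, hr, hrt, x, hx, hxr⟩ := mem_filter.1 hC
    obtain ⟨y, hy, hy1, hy2⟩ := h.exists_origin hr
    have := h.key_inj y hy x ((hP.part_box C hC𝒞).subset hx) (by omega)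
    subst this
    exact hbefore' C hC𝒞 y hx (by omega)
  have hlate : ∀ C ∈ s, ∀ w ∈ X ∪ G, (∃ x ∈ C, x.1 = w.1) → (TopPt D).2 ≤ w.2 → w.2 < τ →
      w ∈ G ∧ (w.1, (TopPt D).2) ∈ G ∧ ((TopPt D).2 < w.2 →
        ∀ y ∈ X, y.2 < (TopPt D).2 → min w.1 (TopPt D).1 < y.1 → y.1 < max w.1 (TopPt D).1 →
          False) := by
    rintro C hC w hw ⟨x, hx, hxw⟩ hw1 hw2
    have hdis := hP.disjoint (hs hC) hD (fun he => hDs (he ▸ hC))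
    have hwG : w ∈ G := by
      rcases mem_union.1 hw with hwX | hwG
      · have := h.key_inj x ((hP.part_box C (hs hC)).subset hx) w hwX hxw
        subst this
        exact absurd (hduring x hwX hw1 hw2) (hdis x hx)
      · exact hwG
    obtain ⟨p, hp, hpt⟩ := h.exists_access hw
    have hpD := hduring p hp (by omega) (by omega)
    have hwD : ∀ b ∈ D, b.1 ≠ w.1 := by
      intro b hb hbw
      have := h.key_inj x ((hP.part_box C (hs hC)).subset hx) b (hDbox.subset hb) (by omega)
      subst this
      exact hdis x hx hb
    refine ⟨hwG, ?_, fun hlt => h.no_between hDbox hpD (by omega) hwG (by omega) hwD⟩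
    rcases hw1.lt_or_eq with hlt | heq
    · exact h.mem_at_top hDbox hpD (by omega) hwG (by omega) hwD
    · rw [heq]; exact hwG
  refine potential_step (fun C => (TopPt C).1) 𝒞 s (touchedParts G 𝒞 (TopPt D).2) D _ _
    ((TopPt D).2 : WithBot ℤ) (hP.top_key_inj h) hs hD hDs hTs ?_ ?_ ?_ ?_ ?_
  · intro C hC E hE hEC h1 h2
    obtain ⟨hC𝒞, r, hr, hrt, x, hx, hxr⟩ := mem_filter.1 hC
    obtain ⟨p, hp, hpt, q, hq, hqt, hqk, hqp, hemp⟩ := (h.mem_iff r).1 hr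
    have hpD : p = TopPt D := h.time_inj p hp _ (hDbox.subset hDtop) (by omega)
    subst hpD
    have hqle : (q.2 : WithBot ℤ) ≤ lastTouch (X ∪ G) (TopPt D).2 C :=
      le_sup (f := fun r : Pt => (r.2 : WithBot ℤ))
        (mem_filter.2 ⟨hq, by omega, x, hx, by omega⟩)
    refine lt_of_lt_of_le ?_ hqle
    refine (Finset.sup_lt_iff (WithBot.bot_lt_coe _)).2 ?_
    intro w hw
    obtain ⟨hwS, hwt, e, he, hew⟩ := mem_filter.1 hw
    rw [WithBot.coe_lt_coe]
    by_contra hcon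
    have hE𝒞 := hs hE
    have hEbox := hP.part_box E hE𝒞
    have hCbox := hP.part_box C hC𝒞
    have hEtop := (TopPt_spec hEbox.nonempty).1
    have hCtop := (TopPt_spec hCbox.nonempty).1
    have hED : E ≠ D := fun h => hDs (h ▸ hE)
    have k1 : (TopPt E).1 ≠ (TopPt D).1 := fun hk => hED (hP.top_key_inj h E hE𝒞 D hD hk)
    have k2 : (TopPt E).1 ≠ (TopPt C).1 := fun hk => hEC (hP.top_key_inj h E hE𝒞 C hC𝒞 hk)
    have hbet : min (TopPt D).1 x.1 < e.1 ∧ e.1 < max (TopPt D).1 x.1 := by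
      rcases lt_or_gt_of_ne k1 with hlt | hgt
      · have a1 := hEbox.key_lt hDbox (hP.disjoint hE𝒞 hD hED) hEtop hDtop he hDtop hlt
        have a2 := hCbox.key_lt hEbox (hP.disjoint hC𝒞 hE𝒞 hEC.symm) hCtop hEtop hx he (by omega)
        omega
      · have a1 := hDbox.key_lt hEbox (hP.disjoint hD hE𝒞 hED.symm) hDtop hEtop hDtop he hgt
        have a2 := hEbox.key_lt hCbox (hP.disjoint hE𝒞 hC𝒞 hEC) hEtop hCtop he hx (by omega)
        omega
    have := congrArg Prod.fst (hemp w hwS (by omega) ⟨by omega, by omega, by omega, by omega⟩)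
    omega
  · intro C hC
    refine sup_mono fun w hw => ?_
    obtain ⟨a1, a2, a3⟩ := mem_filter.1 hw
    exact mem_filter.2 ⟨a1, a2.trans hτ, a3⟩
  · intro C hC hCT
    unfold lastTouch
    congr 1
    ext w
    simp only [mem_filter]
    constructor
    · rintro ⟨a1, a2, a3⟩
      refine ⟨a1, ?_, a3⟩
      by_contra hcon
      obtain ⟨x, hx, hxw⟩ := a3
      have := (hlate C hC w a1 ⟨x, hx, hxw⟩ (by omega) a2).2.1
      exact hCT (mem_filter.2 ⟨hs hC, _, this, rfl, x, hx, hxw⟩)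
    · rintro ⟨a1, a2, a3⟩
      exact ⟨a1, a2.trans hτ, a3⟩
  · intro C hC
    obtain ⟨hC𝒞, r, hr, hrt, x, hx, hxr⟩ := mem_filter.1 hC
    rw [← hrt]
    exact le_sup (f := fun r : Pt => (r.2 : WithBot ℤ))
        (mem_filter.2 ⟨mem_union_right _ hr, by omega, x, hx, by omega⟩)
  · intro C hC E hE h1 h2
    refine Finset.sup_le fun w hw => ?_
    obtain ⟨hwS, hwt, x, hx, hxw⟩ := mem_filter.1 hw
    rw [WithBot.coe_le_coe]
    by_contra hcon
    have hC𝒞 := hs (hTs hC)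
    have hE𝒞 := hs (hTs hE)
    have hEbox := hP.part_box E hE𝒞
    have hCbox := hP.part_box C hC𝒞
    have hEtop := (TopPt_spec hEbox.nonempty).1
    have hCtop := (TopPt_spec hCbox.nonempty).1
    have hCE : C ≠ E := by rintro rfl; omega
    have key := (hlate C (hTs hC) w hwS ⟨x, hx, hxw⟩ (by omega) hwt).2.2 (by omega) (TopPt E)
      (hEbox.subset hEtop) (hbefore E (hTs hE) _ hEtop)
    rcases lt_trichotomy (TopPt C).1 (TopPt E).1 with hlt | heq | hgt
    · have := hCbox.key_lt hEbox (hP.disjoint hC𝒞 hE𝒞 hCE) hCtop hEtop hx hEtop hlt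
      exact key (by omega) (by omega)
    · omega
    · have := hEbox.key_lt hCbox (hP.disjoint hE𝒞 hC𝒞 hCE.symm) hEtop hCtop hEtop hx hgt
      exact key (by omega) (by omega)

theorem sum_touchedParts_le (h : IsGreedy X G) (hP : IsBoxPartition X B 𝒞) :
    ∑ C ∈ 𝒞, 2 * (#(touchedParts G 𝒞 (TopPt C).2) : ℝ) ≤
      #𝒞 * (8 + 9 * Real.logb 2 (#𝒞 : ℝ)) := by
  obtain ⟨hBtop, hBmin⟩ := TopPt_spec hP.box.nonempty
  have main : ∀ s : Finset (Finset Pt), s ⊆ 𝒞 → ∀ τ : ℤ,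
      (∀ p ∈ X, (TopPt B).2 ≤ p.2 → (p.2 < τ ↔ ∃ C ∈ s, p ∈ C)) →
      ∑ C ∈ s, 2 * (#(touchedParts G 𝒞 (TopPt C).2) : ℝ) +
        potential (fun C => (TopPt C).1) 𝒞 s (lastTouch (X ∪ G) τ) ≤
      #s * (8 + 9 * Real.logb 2 (#𝒞 : ℝ)) := by
    intro s
    induction s using Finset.induction_on_max_value (fun C => (TopPt C).2) with
    | empty => intro _ τ _; simp [potential]
    | insert D s hDs hmax ih =>
      intro hsub τ hτ
      have hD : D ∈ 𝒞 := hsub (mem_insert_self D s)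
      have hs : s ⊆ 𝒞 := fun x hx => hsub (mem_insert_of_mem hx)
      have hDbox := hP.part_box D hD
      obtain ⟨hDtop, hDmin⟩ := TopPt_spec hDbox.nonempty
      have hbefore : ∀ C ∈ s, ∀ c ∈ C, c.2 < (TopPt D).2 := fun C hC =>
        (hP.part_box C (hs hC)).time_lt hDbox
          (hP.disjoint (hs hC) hD (fun he => hDs (he ▸ hC))) (hmax C hC)
      have hBle : ∀ C ∈ 𝒞, ∀ c ∈ C, (TopPt B).2 ≤ c.2 := fun C hC c hc =>
        hBmin c (hP.part_subset C hC hc)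
      have hDτ : (TopPt D).2 < τ :=
        (hτ _ (hDbox.subset hDtop) (hBle D hD _ hDtop)).2 ⟨D, mem_insert_self D s, hDtop⟩
      have hiff : ∀ p ∈ X, (TopPt B).2 ≤ p.2 → (p.2 < (TopPt D).2 ↔ ∃ C ∈ s, p ∈ C) := by
        intro p hp hpB
        constructor
        · intro hlt
          obtain ⟨C, hC, hpC⟩ := (hτ p hp hpB).1 (hlt.trans hDτ)
          rcases mem_insert.1 hC with rfl | hC
          · have := hDmin p hpC
            omega
          · exact ⟨C, hC, hpC⟩
        · rintro ⟨C, hC, hpC⟩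
          exact hbefore C hC p hpC
      have h1 := ih hs _ hiff
      have h2 := hP.potential_part h hs hD hDs hbefore
        (fun C hC c hc hlt => by
          obtain ⟨C', hC', hc'⟩ := (hiff c ((hP.part_box C hC).subset hc) (hBle C hC c hc)).1 hlt
          exact hP.eq_of_mem C' (hs hC') C hC c hc' hc ▸ hC') hDτ
        (fun p hp hp1 hp2 => by
          obtain ⟨C, hC, hpC⟩ := (hτ p hp (by have := hBle D hD _ hDtop; omega)).1 hp2
          rcases mem_insert.1 hC with rfl | hC
          · exact hpC
          · have := hbefore C hC p hpC
            omega)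
      rw [sum_insert hDs, card_insert_of_notMem hDs]
      push_cast
      linarith
  obtain ⟨e, he, hemax⟩ := exists_max_image B Prod.snd hP.box.nonempty
  have h1 := main 𝒞 subset_rfl (e.2 + 1) (by
    intro p hp hpB
    constructor
    · intro hlt
      exact hP.cover p (hP.box.time_convex p hp _ hBtop e he hpB (by omega))
    · rintro ⟨C, hC, hpC⟩
      have := hemax p (hP.part_subset C hC hpC)
      omega)
  have h2 : 0 ≤ potential (fun C => (TopPt C).1) 𝒞 𝒞 (lastTouch (X ∪ G) (e.2 + 1)) :=
    sum_nonneg fun C hC => by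
      rcases Nat.eq_zero_or_pos
        #(nbhd (fun C => (TopPt C).1) 𝒞 𝒞 (lastTouch (X ∪ G) (e.2 + 1)) C) with h0 | h0
      · rw [h0]; simp
      · exact Real.logb_nonneg (by norm_num) (by exact_mod_cast h0)
  linarith

end IsBoxPartition

/-- A finite set of points of which no three have strictly increasing keys, on one horizontal
line, has at most two elements. -/
theorem card_le_two_of_no_chain (A : Finset Pt) (t : ℤ) (ht : ∀ r ∈ A, r.2 = t)
    (hA : ∀ x ∈ A, ∀ y ∈ A, ∀ z ∈ A, x.1 < y.1 → y.1 < z.1 → False) : #A ≤ 2 := by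
  rcases A.eq_empty_or_nonempty with rfl | hne
  · simp
  obtain ⟨u, hu, humin⟩ := exists_min_image A Prod.fst hne
  obtain ⟨v, hv, hvmax⟩ := exists_max_image A Prod.fst hne
  have hsub : A ⊆ {u, v} := by
    intro x hx
    rw [mem_insert, mem_singleton]
    by_contra hcon
    push Not at hcon
    have h1 := humin x hx
    have h2 := hvmax x hx
    have t1 := ht x hx
    have t2 := ht u hu
    have t3 := ht v hv
    have n1 : x.1 ≠ u.1 := fun hk => hcon.1 (Prod.ext hk (by omega))
    have n2 : x.1 ≠ v.1 := fun hk => hcon.2 (Prod.ext hk (by omega))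
    exact hA u hu x hx v hv (by omega) (by omega)
  exact (card_le_card hsub).trans card_le_two

namespace IsBoxPartition

variable {X G B : Finset Pt} {𝒞 : Finset (Finset Pt)}

theorem card_nonfinal_le (h : IsGreedy X G) (hP : IsBoxPartition X B 𝒞) {D : Finset Pt}
    (hD : D ∈ 𝒞) (htop : TopPt B ∉ D) :
    #(nonfinal G (TopPt D).2) ≤ 2 + 2 * #(touchedParts G 𝒞 (TopPt D).2) := by
  obtain ⟨hBtop, hBmin⟩ := TopPt_spec hP.box.nonempty
  have hDbox := hP.part_box D hD
  obtain ⟨hDtop, hDmin⟩ := TopPt_spec hDbox.nonempty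
  have hDB := hP.part_subset D hD hDtop
  have hlt : (TopPt B).2 < (TopPt D).2 := by
    rcases (hBmin _ hDB).lt_or_eq with hlt | heq
    · exact hlt
    · rw [← h.time_inj _ (hP.box.subset hBtop) _ (hDbox.subset hDtop) heq] at hDtop
      exact absurd hDtop htop
  set t := (TopPt D).2 with ht
  have hsub : nonfinal G t ⊆ (nonfinal G t).filter (fun r => ¬ ∃ b ∈ B, b.1 = r.1) ∪
      (touchedParts G 𝒞 t).biUnion
        (fun C => (nonfinal G t).filter (fun r => ∃ x ∈ C, x.1 = r.1)) := by
    intro r hr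
    obtain ⟨hrG, hrt, -⟩ := mem_filter.1 hr
    by_cases hc : ∃ b ∈ B, b.1 = r.1
    · obtain ⟨b, hb, hbr⟩ := hc
      obtain ⟨C, hC, hbC⟩ := hP.cover b hb
      exact mem_union_right _ (mem_biUnion.2 ⟨C, mem_filter.2 ⟨hC, r, hrG, hrt, b, hbC, hbr⟩,
        mem_filter.2 ⟨hr, b, hbC, hbr⟩⟩)
    · exact mem_union_left _ (mem_filter.2 ⟨hr, hc⟩)
  have hout : #((nonfinal G t).filter (fun r => ¬ ∃ b ∈ B, b.1 = r.1)) ≤ 2 := by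
    refine card_le_two_of_no_chain _ t (fun r hr => (mem_filter.1 (mem_filter.1 hr).1).2.1) ?_
    intro x hx y hy z hz hxy hyz
    obtain ⟨hx', hxN⟩ := mem_filter.1 hx
    have hxB : ∀ b ∈ B, b.1 ≠ x.1 := fun b hb hk => hxN ⟨b, hb, hk⟩
    obtain ⟨hy', hyN⟩ := mem_filter.1 hy
    have hyB : ∀ b ∈ B, b.1 ≠ y.1 := fun b hb hk => hyN ⟨b, hb, hk⟩
    obtain ⟨hz', hzN⟩ := mem_filter.1 hz
    have hzB : ∀ b ∈ B, b.1 ≠ z.1 := fun b hb hk => hzN ⟨b, hb, hk⟩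
    obtain ⟨hxG, hxt, -⟩ := mem_filter.1 hx'
    obtain ⟨hyG, hyt, -⟩ := mem_filter.1 hy'
    obtain ⟨hzG, hzt, -⟩ := mem_filter.1 hz'
    obtain ⟨w, hw, hw1, hw2⟩ := h.exists_origin hyG
    have hwt : w.2 < (TopPt B).2 := by
      by_contra hcon
      exact hyB w (hP.box.time_convex w hw _ hBtop _ hDB (by omega) (by omega)) hw1
    have hne := hyB _ hBtop
    by_cases hside : y.1 < (TopPt B).1
    · exact h.no_between hP.box hDB hlt hxG hxt hxB w hw hwt (by omega) (by omega)
    · exact h.no_between hP.box hDB hlt hzG hzt hzB w hw hwt (by omega) (by omega)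
  have hin : ∀ C ∈ touchedParts G 𝒞 t,
      #((nonfinal G t).filter (fun r => ∃ x ∈ C, x.1 = r.1)) ≤ 2 := by
    intro C hC
    have hC𝒞 := (mem_filter.1 hC).1
    have hCbox := hP.part_box C hC𝒞
    refine card_le_two_of_no_chain _ t (fun r hr => (mem_filter.1 (mem_filter.1 hr).1).2.1) ?_
    intro x hx y hy z hz hxy hyz
    obtain ⟨hx', a, ha, hax⟩ := mem_filter.1 hx
    obtain ⟨hy', b, hb, hby⟩ := mem_filter.1 hy
    obtain ⟨hz', c, hc, hcz⟩ := mem_filter.1 hz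
    obtain ⟨hxG, hxt, -⟩ := mem_filter.1 hx'
    obtain ⟨hyG, hyt, r, hr, hry, hrt⟩ := mem_filter.1 hy'
    obtain ⟨hzG, hzt, -⟩ := mem_filter.1 hz'
    obtain ⟨w, hw, hw1, hw2⟩ := h.exists_origin hyG
    have hwb := h.key_inj w hw b (hCbox.subset hb) (by omega)
    subst hwb
    have hCD : C ≠ D := by
      rintro rfl
      have := hDmin w hb
      omega
    have hle : (TopPt C).2 ≤ t := by
      have := (TopPt_spec hCbox.nonempty).2 w hb
      omega
    have e : ∀ u v : Pt, u.1 = v.1 → v.2 = t → (u.1, t) = v := fun u v h1 h2 =>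
      Prod.ext h1 h2.symm
    exact h.not_touched_after hCbox ha hc
      (hCbox.time_lt hDbox (hP.disjoint hC𝒞 hD hCD) hle)
      (e a x hax hxt ▸ hxG) (e y y rfl hyt ▸ hyG) (e c z hcz hzt ▸ hzG) (by omega) (by omega)
      r hr hry hrt
  calc #(nonfinal G t) ≤ _ := card_le_card hsub
    _ ≤ _ := card_union_le _ _
    _ ≤ 2 + 2 * #(touchedParts G 𝒞 t) := by
      refine add_le_add hout ?_
      rw [mul_comm]
      exact card_biUnion_le_card_mul _ _ _ hin

theorem sum_nonfinal_le (h : IsGreedy X G) (hP : IsBoxPartition X B 𝒞) {k : ℕ}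
    (h2 : 2 ≤ #𝒞) (hk : #𝒞 ≤ k) :
    ∑ C ∈ 𝒞, (#(nonfinal G (TopPt C).2) : ℝ) ≤
      #(nonfinal G (TopPt B).2) + (#𝒞 - 1) * (36 * Real.logb 2 k) := by
  obtain ⟨hBtop, hBmin⟩ := TopPt_spec hP.box.nonempty
  obtain ⟨C₀, hC₀, hC₀top⟩ := hP.cover _ hBtop
  have hbox₀ := hP.part_box C₀ hC₀
  obtain ⟨htop₀, hmin₀⟩ := TopPt_spec hbox₀.nonempty
  have heq : (TopPt C₀).2 = (TopPt B).2 :=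
    le_antisymm (hmin₀ _ hC₀top) (hBmin _ (hP.part_subset C₀ hC₀ htop₀))
  have h1 := hP.sum_touchedParts_le h
  have hrest : ∑ C ∈ 𝒞.erase C₀, (#(nonfinal G (TopPt C).2) : ℝ) ≤
      ∑ C ∈ 𝒞.erase C₀, (2 + 2 * (#(touchedParts G 𝒞 (TopPt C).2) : ℝ)) := by
    refine sum_le_sum fun C hC => ?_
    obtain ⟨hne, hC𝒞⟩ := mem_erase.1 hC
    exact_mod_cast hP.card_nonfinal_le h hC𝒞 (hP.disjoint hC₀ hC𝒞 hne.symm _ hC₀top)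
  have hsub : ∑ C ∈ 𝒞.erase C₀, 2 * (#(touchedParts G 𝒞 (TopPt C).2) : ℝ) ≤
      ∑ C ∈ 𝒞, 2 * (#(touchedParts G 𝒞 (TopPt C).2) : ℝ) :=
    sum_le_sum_of_subset_of_nonneg (erase_subset _ _) fun _ _ _ => by positivity
  rw [sum_add_distrib, sum_const, card_erase_of_mem hC₀, nsmul_eq_mul,
    Nat.cast_sub (by omega)] at hrest
  rw [← add_sum_erase _ _ hC₀, heq]
  have hlog : Real.logb 2 (#𝒞 : ℝ) ≤ Real.logb 2 k :=
    Real.logb_le_logb_of_le (by norm_num) (by exact_mod_cast (by omega : 0 < #𝒞))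
      (by exact_mod_cast hk)
  have hlog1 : 1 ≤ Real.logb 2 (#𝒞 : ℝ) := by
    rw [Real.le_logb_iff_rpow_le (by norm_num) (by exact_mod_cast (by omega : 0 < #𝒞))]
    rw [Real.rpow_one]
    exact_mod_cast h2
  have hm : (2 : ℝ) ≤ #𝒞 := by exact_mod_cast h2
  push_cast at hrest
  have e1 : (#𝒞 : ℝ) * (8 + 9 * Real.logb 2 (#𝒞 : ℝ)) ≤ (2 * (#𝒞 - 1)) * (17 * Real.logb 2 k) :=
    mul_le_mul (by linarith) (by linarith) (by linarith) (by linarith)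
  have e2 : ((#𝒞 : ℝ) - 1) * 2 ≤ (#𝒞 - 1) * (2 * Real.logb 2 k) :=
    mul_le_mul_of_nonneg_left (by linarith) (by linarith)
  linarith

end IsBoxPartition

theorem mem_greedyUpTo {X : Finset Pt} {N : ℕ} {r : Pt} :
    r ∈ greedyUpTo X N ↔ ∃ t < N, r ∈ greedyStep X (greedyUpTo X t) ((t : ℤ) + 1) := by
  induction N with
  | zero => simp [greedyUpTo]
  | succ N ih =>
    rw [greedyUpTo, mem_union, ih]
    constructor
    · rintro (⟨t, ht, hr⟩ | hr)
      · exact ⟨t, by omega, hr⟩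
      · exact ⟨N, by omega, hr⟩
    · rintro ⟨t, ht, hr⟩
      rcases Nat.lt_succ_iff_lt_or_eq.1 ht with h | rfl
      · exact Or.inl ⟨t, h, hr⟩
      · exact Or.inr hr

theorem mem_greedyStep {X G : Finset Pt} {t : ℤ} {r : Pt} :
    r ∈ greedyStep X G t ↔ r.2 = t ∧ ∃ p ∈ X, p.2 = t ∧ ∃ q ∈ X ∪ G, q.2 < t ∧ q.1 = r.1 ∧
      q.1 ≠ p.1 ∧ ∀ w ∈ X ∪ G, w.2 < t → inRect p q w → w = q := by
  simp only [greedyStep, mem_biUnion, mem_image, mem_filter]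
  constructor
  · rintro ⟨p, ⟨hp, hpt⟩, q, ⟨⟨hq, hqt⟩, hne, hemp⟩, rfl⟩
    exact ⟨rfl, p, hp, hpt, q, hq, hqt, rfl, hne, fun w hw hwt => hemp w ⟨hw, hwt⟩⟩
  · rintro ⟨rfl, p, hp, hpt, q, hq, hqt, hqr, hne, hemp⟩
    exact ⟨p, ⟨hp, hpt⟩, q, ⟨⟨hq, hqt⟩, hne, fun w hw => hemp w hw.1 hw.2⟩, Prod.ext hqr rfl⟩

theorem mem_union_greedyUpTo_iff {X : Finset Pt} {t N : ℕ} (htN : t ≤ N) {w : Pt}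
    (hw : w.2 < (t : ℤ) + 1) : w ∈ X ∪ greedyUpTo X t ↔ w ∈ X ∪ greedyUpTo X N := by
  simp only [mem_union, mem_greedyUpTo (N := t), mem_greedyUpTo (N := N)]
  refine or_congr_right ⟨fun ⟨u, hu, h⟩ => ⟨u, by omega, h⟩, fun ⟨u, _, h⟩ => ⟨u, ?_, h⟩⟩
  have := (mem_greedyStep.1 h).1
  omega

theorem IsPermPointSet.isGreedy {n : ℕ} {X : Finset Pt} (hX : IsPermPointSet n X) :
    IsGreedy X (greedyG n X) := by
  obtain ⟨σ, hσ⟩ := hX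
  have hmem : ∀ p ∈ X, ∃ t : Fin n, p = (((σ t : ℕ) : ℤ) + 1, ((t : ℕ) : ℤ) + 1) := by
    intro p hp
    rw [hσ] at hp
    obtain ⟨t, -, rfl⟩ := mem_image.1 hp
    exact ⟨t, rfl⟩
  refine ⟨?_, ?_, ?_⟩
  · intro p hp q hq hpq
    obtain ⟨t, rfl⟩ := hmem p hp
    obtain ⟨u, rfl⟩ := hmem q hq
    have : σ t = σ u := Fin.ext (by dsimp only at hpq; omega)
    rw [σ.injective this]
  · intro p hp q hq hpq
    obtain ⟨t, rfl⟩ := hmem p hp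
    obtain ⟨u, rfl⟩ := hmem q hq
    have : t = u := Fin.ext (by dsimp only at hpq; omega)
    rw [this]
  · intro r
    unfold greedyG
    constructor
    · intro hr
      obtain ⟨t, ht, hr⟩ := mem_greedyUpTo.1 hr
      obtain ⟨hrt, p, hp, hpt, q, hq, hqt, hqr, hne, hemp⟩ := mem_greedyStep.1 hr
      refine ⟨p, hp, by omega, q, (mem_union_greedyUpTo_iff ht.le hqt).1 hq, by omega, hqr, hne, ?_⟩
      intro w hw hwt
      rw [hrt] at hwt
      exact hemp w ((mem_union_greedyUpTo_iff ht.le hwt).2 hw) hwt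
    · rintro ⟨p, hp, hpt, q, hq, hqt, hqr, hne, hemp⟩
      obtain ⟨t, rfl⟩ := hmem p hp
      dsimp only at hpt
      rw [← hpt] at hqt hemp
      refine mem_greedyUpTo.2 ⟨t, t.2, mem_greedyStep.2 ⟨hpt.symm, _, hp, rfl, q,
        (mem_union_greedyUpTo_iff t.2.le hqt).2 hq, hqt, hqr, hne, ?_⟩⟩
      intro w hw hwt
      exact hemp w ((mem_union_greedyUpTo_iff t.2.le hwt).1 hw) hwt

theorem IsPermPointSet.card_eq {n : ℕ} {X : Finset Pt} (hX : IsPermPointSet n X) : #X = n := by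
  obtain ⟨σ, rfl⟩ := hX
  rw [card_image_of_injective, card_univ, Fintype.card_fin]
  intro t u htu
  have := congrArg Prod.snd htu
  exact Fin.ext (by dsimp only at this; omega)

theorem IsBlock.isBox {X B : Finset Pt} (hkey : ∀ p ∈ X, ∀ q ∈ X, p.1 = q.1 → p = q)
    (hB : IsBlock X B) : IsBox X B := by
  obtain ⟨hne, ⟨i, j, hij⟩, c, d, hcd⟩ := hB
  have hsub : B ⊆ X := by rw [hij]; exact filter_subset _ _
  have htime : ∀ p ∈ B, i ≤ p.2 ∧ p.2 ≤ j := fun p hp => by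
    rw [hij] at hp
    exact (mem_filter.1 hp).2
  have hkeys : ∀ p ∈ B, c ≤ p.1 ∧ p.1 ≤ d := fun p hp => by
    have := mem_image_of_mem Prod.fst hp
    rw [hcd] at this
    exact mem_Icc.1 this
  refine ⟨hne, hsub, ?_, ?_⟩
  · intro p hp q hq r hr h1 h2
    have a1 := htime q hq
    have a2 := htime r hr
    rw [hij]
    exact mem_filter.2 ⟨hp, by omega, by omega⟩
  · intro p hp q hq r hr h1 h2
    have a1 := hkeys q hq
    have a2 := hkeys r hr
    have : p.1 ∈ B.image Prod.fst := by
      rw [hcd]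
      exact mem_Icc.2 ⟨by omega, by omega⟩
    obtain ⟨b, hb, hbp⟩ := mem_image.1 this
    exact hkey b (hsub hb) p hp hbp ▸ hb

namespace DecompTree

variable {X G : Finset Pt}

theorem isBoxPartition_children (h : IsGreedy X G) (T : DecompTree X) {B : Finset Pt}
    (hB : B ∈ T.nodes) (hc : #B ≠ 1) : IsBoxPartition X B (T.children B) := by
  have hmem : ∀ C ∈ T.children B, C ∈ T.nodes ∧ C ≠ X ∧ T.parent C = B := fun C hC =>
    mem_filter.1 hC
  have hsub : ∀ C ∈ T.children B, C ⊆ B := fun C hC => by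
    obtain ⟨h1, h2, h3⟩ := hmem C hC
    exact h3 ▸ (T.ssubset_parent C h1 h2).1
  refine ⟨(T.isBlock_nodes B hB).isBox h.key_inj,
    fun C hC => (T.isBlock_nodes C (hmem C hC).1).isBox h.key_inj, hsub, ?_, ?_⟩
  · intro p hp
    obtain ⟨C, ⟨h1, h2, h3, h4⟩, -⟩ := T.children_partition B hB hc p hp
    exact ⟨C, mem_filter.2 ⟨h1, h2, h3⟩, h4⟩
  · intro C hC D hD p hpC hpD
    obtain ⟨E, -, huniq⟩ := T.children_partition B hB hc p (hsub C hC hpC)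
    obtain ⟨c1, c2, c3⟩ := hmem C hC
    obtain ⟨d1, d2, d3⟩ := hmem D hD
    rw [huniq C ⟨c1, c2, c3, hpC⟩, huniq D ⟨d1, d2, d3, hpD⟩]

theorem sum_nonfinal_node_le (h : IsGreedy X G) (T : DecompTree X) {k : ℕ}
    (hT : ∀ B ∈ T.nodes, #(T.children B) ≤ k) :
    ∀ (N : ℕ) (B : Finset Pt), B ∈ T.nodes → #B ≤ N →
      ∑ p ∈ B, (#(nonfinal G p.2) : ℝ) ≤
        (#B - 1) * (36 * Real.logb 2 k) + #(nonfinal G (TopPt B).2) := by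
  intro N
  induction N with
  | zero =>
    intro B hB hN
    have := card_pos.2 (T.isBlock_nodes B hB).1
    omega
  | succ N ih =>
    intro B hB hN
    by_cases hc : #B = 1
    · obtain ⟨p, rfl⟩ := card_eq_one.1 hc
      have : TopPt {p} = p := mem_singleton.1 (TopPt_spec (singleton_nonempty p)).1
      simp [this]
    have hP := T.isBoxPartition_children h hB hc
    set 𝒞 := T.children B with h𝒞
    have hmem : ∀ C ∈ 𝒞, C ∈ T.nodes ∧ C ⊂ B := fun C hC => by
      obtain ⟨h1, h2, h3⟩ := mem_filter.1 hC
      exact ⟨h1, h3 ▸ T.ssubset_parent C h1 h2⟩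
    have hunion : B = 𝒞.biUnion id := by
      ext p
      simp only [mem_biUnion, id]
      exact ⟨hP.cover p, fun ⟨C, hC, hp⟩ => hP.part_subset C hC hp⟩
    have hdisj : (𝒞 : Set (Finset Pt)).PairwiseDisjoint id := fun C hC D hD hne =>
      disjoint_left.2 (hP.disjoint hC hD hne)
    have h2 : 2 ≤ #𝒞 := by
      obtain ⟨C, hC, -⟩ := hP.cover _ (TopPt_spec hP.box.nonempty).1
      obtain ⟨p, hpB, hpC⟩ := exists_of_ssubset (hmem C hC).2
      obtain ⟨D, hD, hpD⟩ := hP.cover p hpB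
      exact one_lt_card.2 ⟨C, hC, D, hD, fun he => hpC (he ▸ hpD)⟩
    have hsum : ∑ p ∈ B, (#(nonfinal G p.2) : ℝ) = ∑ C ∈ 𝒞, ∑ p ∈ C, (#(nonfinal G p.2) : ℝ) := by
      conv_lhs => rw [hunion]
      rw [sum_biUnion hdisj]
      rfl
    have hcard : (#B : ℝ) = ∑ C ∈ 𝒞, (#C : ℝ) := by
      have : #B = ∑ C ∈ 𝒞, #C := by
        conv_lhs => rw [hunion]
        rw [card_biUnion hdisj]
        rfl
      exact_mod_cast this
    have hih : ∑ C ∈ 𝒞, ∑ p ∈ C, (#(nonfinal G p.2) : ℝ) ≤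
        ∑ C ∈ 𝒞, (((#C : ℝ) - 1) * (36 * Real.logb 2 k) + #(nonfinal G (TopPt C).2)) := by
      refine sum_le_sum fun C hC => ih C (hmem C hC).1 ?_
      have := card_lt_card (hmem C hC).2
      omega
    rw [sum_add_distrib, ← sum_mul, sum_sub_distrib, ← hcard, sum_const, nsmul_eq_mul,
      mul_one] at hih
    have hnode := hP.sum_nonfinal_le h h2 (hT B hB)
    rw [hsum]
    linarith

end DecompTree

theorem IsGreedy.card_le {X G : Finset Pt} (h : IsGreedy X G) :
    (#G : ℝ) ≤ #X + ∑ p ∈ X, (#(nonfinal G p.2) : ℝ) := by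
  have hsub : G ⊆ G.filter (fun r => ¬ ∃ r' ∈ G, r'.1 = r.1 ∧ r.2 < r'.2) ∪
      X.biUnion (fun p => nonfinal G p.2) := by
    intro r hr
    by_cases hc : ∃ r' ∈ G, r'.1 = r.1 ∧ r.2 < r'.2
    · obtain ⟨p, hp, hpt⟩ := h.exists_access (mem_union_right _ hr)
      refine mem_union_right _ (mem_biUnion.2 ⟨p, hp, mem_filter.2 ⟨hr, hpt.symm, ?_⟩⟩)
      rw [hpt]
      exact hc
    · exact mem_union_left _ (mem_filter.2 ⟨hr, hc⟩)
  have hfinal : #(G.filter (fun r => ¬ ∃ r' ∈ G, r'.1 = r.1 ∧ r.2 < r'.2)) ≤ #X := by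
    refine (card_le_card_of_injOn (t := X.image Prod.fst) Prod.fst ?_ ?_).trans card_image_le
    · intro r hr
      obtain ⟨x, hx, hx1, -⟩ := h.exists_origin (mem_filter.1 hr).1
      exact mem_image.2 ⟨x, hx, hx1⟩
    · intro r hr r' hr' heq
      obtain ⟨h1, h2⟩ := mem_filter.1 hr
      obtain ⟨h3, h4⟩ := mem_filter.1 hr'
      refine Prod.ext heq (le_antisymm ?_ ?_)
      · exact not_lt.1 fun hlt => h4 ⟨r, h1, heq, hlt⟩
      · exact not_lt.1 fun hlt => h2 ⟨r', h3, heq.symm, hlt⟩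
  have : #G ≤ #X + ∑ p ∈ X, #(nonfinal G p.2) :=
    (card_le_card hsub).trans ((card_union_le _ _).trans (add_le_add hfinal card_biUnion_le))
  exact_mod_cast this

/-- For every integer `k ≥ 2` and every `k`-decomposable permutation point
set `X` of size `n`, the set `BR` of points of `G` whose pair is a bad pair satisfies
`|BR| ≤ 80 · n · log₂ k`. -/
theorem br_bound (n k : ℕ) (X : Finset Pt) (hk : 2 ≤ k)
    (hX : IsPermPointSet n X) (hdec : kDecomposable k X) :
    (((greedyG n X).filter (fun r => inMFC X (greedyG n X) r ∧
        ¬ IsGoodPair X (CP X (greedyG n X) r))).card : ℝ) ≤ 80 * n * Real.logb 2 k := by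
  have h := hX.isGreedy
  obtain ⟨T, hT⟩ := hdec
  have hlog : 1 ≤ Real.logb 2 (k : ℝ) := by
    rw [Real.le_logb_iff_rpow_le (by norm_num) (by positivity), Real.rpow_one]
    exact_mod_cast hk
  have hroot := T.sum_nonfinal_node_le h hT _ X T.root_mem le_rfl
  have htop : nonfinal (greedyG n X) (TopPt X).2 = ∅ := by
    refine filter_eq_empty_iff.2 ?_
    rintro r hr ⟨hrt, -⟩
    obtain ⟨x, hx, -, hx2⟩ := h.exists_origin hr
    have := (TopPt_spec ⟨x, hx⟩).2 x hx
    omega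
  have hG := h.card_le
  have hBR : (((greedyG n X).filter (fun r => inMFC X (greedyG n X) r ∧
      ¬ IsGoodPair X (CP X (greedyG n X) r))).card : ℝ) ≤ #(greedyG n X) :=
    Nat.cast_le.2 (card_filter_le _ _)
  rw [htop, card_empty, Nat.cast_zero, add_zero] at hroot
  rw [hX.card_eq] at hroot hG
  have hn : (n : ℝ) ≤ n * Real.logb 2 k := le_mul_of_one_le_right (Nat.cast_nonneg n) hlog
  linarith
end

section
/- Let S be a finite arborally satisfied planar point set and let p, q ∈ S with time(q) < time(p) and key(p) < key(q). Then there exists a point r ∈ S \ {p, q} lying in the closed axis-parallel rectangle with corners p and q such that either r is above p (key(r) = key(p) and time(r) < time(p)) or time(r) = time(p) and key(p) < key(r). -/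
open Finset

attribute [local instance] Classical.propDecidable

/-- In a finite arborally satisfied set `S`, for `p, q ∈ S` with
`time(q) < time(p)` and `key(p) < key(q)`, there is a point `r ∈ S \ {p, q}` in the closed
rectangle spanned by `p` and `q` that is above `p` or on the horizontal line of `p`, to the
right of `p`. -/
theorem exists_point_above_or_right (S : Finset Pt) (hS : ArbSat S)
    (p q : Pt) (hp : p ∈ S) (hq : q ∈ S) (ht : q.2 < p.2) (hk : p.1 < q.1) :
    ∃ r ∈ S, r ≠ p ∧ r ≠ q ∧ inRect p q r ∧
      ((r.1 = p.1 ∧ r.2 < p.2) ∨ (r.2 = p.2 ∧ p.1 < r.1)) := by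
  induction hn : (q.1 - p.1 + (p.2 - q.2)).toNat using Nat.strong_induction_on generalizing q with
  | _ n ih =>
    obtain h | h | ⟨r, hr, hrp, hrq, hrect⟩ := hS p hp q hq
    · omega
    · omega
    · have hrp' : ¬ (r.1 = p.1 ∧ r.2 = p.2) := fun h => hrp (Prod.ext h.1 h.2)
      have hrq' : ¬ (r.1 = q.1 ∧ r.2 = q.2) := fun h => hrq (Prod.ext h.1 h.2)
      have hbounds := hrect
      unfold inRect at hbounds
      by_cases hline : (r.1 = p.1 ∧ r.2 < p.2) ∨ (r.2 = p.2 ∧ p.1 < r.1)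
      · exact ⟨r, hr, hrp, hrq, hrect, hline⟩
      · obtain ⟨s, hs, hsp, -, hsrect, hsline⟩ :=
          ih _ (by omega) r hr (by omega) (by omega) rfl
        unfold inRect at hsrect
        refine ⟨s, hs, hsp, ?_, by unfold inRect; omega, hsline⟩
        rintro rfl
        omega
end

section
/- Let S be a finite arborally satisfied planar point set and let p, q ∈ S with time(q) < time(p) and key(q) < key(p). Then there exists a point r ∈ S \ {p, q} lying in the closed axis-parallel rectangle with corners p and q such that either r is above p (key(r) = key(p) and time(r) < time(p)) or time(r) = time(p) and key(r) < key(p). -/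
open Finset

attribute [local instance] Classical.propDecidable

/-- In a finite arborally satisfied set `S`, for `p, q ∈ S` with
`time(q) < time(p)` and `key(q) < key(p)`, there is a point `r ∈ S \ {p, q}` in the closed
rectangle spanned by `p` and `q` that is above `p` or on the horizontal line of `p`, to the
left of `p`. -/
theorem exists_point_above_or_left (S : Finset Pt) (hS : ArbSat S)
    (p q : Pt) (hp : p ∈ S) (hq : q ∈ S) (ht : q.2 < p.2) (hk : q.1 < p.1) :
    ∃ r ∈ S, r ≠ p ∧ r ≠ q ∧ inRect p q r ∧
      ((r.1 = p.1 ∧ r.2 < p.2) ∨ (r.2 = p.2 ∧ r.1 < p.1)) := by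
  induction hn : (p.1 - q.1 + (p.2 - q.2)).toNat using Nat.strong_induction_on generalizing q with
  | _ n ih =>
    obtain h | h | ⟨r, hr, hrp, hrq, hrect⟩ := hS p hp q hq
    · omega
    · omega
    have hrect' := hrect
    simp only [inRect, min_eq_right hk.le, min_eq_right ht.le, max_eq_left hk.le,
      max_eq_left ht.le] at hrect'
    have hp' : ¬(r.1 = p.1 ∧ r.2 = p.2) := fun h => hrp (Prod.ext h.1 h.2)
    have hq' : ¬(r.1 = q.1 ∧ r.2 = q.2) := fun h => hrq (Prod.ext h.1 h.2)
    by_cases h1 : r.1 = p.1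
    · exact ⟨r, hr, hrp, hrq, hrect, Or.inl ⟨h1, by omega⟩⟩
    by_cases h2 : r.2 = p.2
    · exact ⟨r, hr, hrp, hrq, hrect, Or.inr ⟨h2, by omega⟩⟩
    obtain ⟨s, hs, hsp, -, hsrect, hs'⟩ := ih _ (by omega) r hr (by omega) (by omega) rfl
    refine ⟨s, hs, hsp, ?_, ?_, hs'⟩
    · rintro rfl
      omega
    · simp only [inRect] at hsrect ⊢
      omega
end

section
/- For every point p ∈ X, GREEDY does not put any marked point above p; that is, there is no point g ∈ G with key(g) = key(p) and time(g) < time(p). -/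
open Finset

attribute [local instance] Classical.propDecidable

/-- Every point added by GREEDY lies strictly below a point of `X` with the same key. -/
theorem exists_mem_above_of_mem_greedyUpTo (X : Finset Pt) (t : ℕ) :
    ∀ g ∈ greedyUpTo X t, ∃ x ∈ X, x.1 = g.1 ∧ x.2 < g.2 := by
  induction t with
  | zero => simp [greedyUpTo]
  | succ t ih =>
    intro g hg
    rw [greedyUpTo, Finset.mem_union] at hg
    rcases hg with hg | hg
    · exact ih g hg
    · simp only [greedyStep, Finset.mem_biUnion, Finset.mem_image, Finset.mem_filter,
        Finset.mem_union] at hg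
      obtain ⟨_, -, q, ⟨⟨hqX | hqG, hqt⟩, -⟩, rfl⟩ := hg
      · exact ⟨q, hqX, rfl, hqt⟩
      · obtain ⟨x, hx, hkey, htime⟩ := ih q hqG
        exact ⟨x, hx, hkey, htime.trans hqt⟩

/-- Points of a permutation point set are determined by their keys. -/
theorem IsPermPointSet.eq_of_key_eq {n : ℕ} {X : Finset Pt} (hX : IsPermPointSet n X)
    {p q : Pt} (hp : p ∈ X) (hq : q ∈ X) (h : p.1 = q.1) : p = q := by
  obtain ⟨σ, rfl⟩ := hX
  obtain ⟨s, -, rfl⟩ := Finset.mem_image.1 hp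
  obtain ⟨t, -, rfl⟩ := Finset.mem_image.1 hq
  have hst : s = t := σ.injective (Fin.ext (by simpa using h))
  rw [hst]

/-- GREEDY never puts a marked point above a point of `X`. -/
theorem no_marked_point_above (n : ℕ) (X : Finset Pt) (hX : IsPermPointSet n X) :
    ∀ p ∈ X, ¬ ∃ g ∈ greedyG n X, g.1 = p.1 ∧ g.2 < p.2 := by
  rintro p hp ⟨g, hg, hkey, htime⟩
  obtain ⟨x, hx, hxkey, hxtime⟩ := exists_mem_above_of_mem_greedyUpTo X n g hg
  have hxp : x = p := hX.eq_of_key_eq hx hp (hxkey.trans hkey)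
  rw [hxp] at hxtime
  exact lt_asymm htime hxtime
end

section
/- Let p, q, r ∈ X ∪ G with time(q) < time(p) and key(p) < key(q), and suppose r hides q from p. Suppose some point of X ∪ G below q has time greater than time(r) and key greater than key(r), and let s be such a point with the smallest time. Then key(OP(s)) > key(r) and time(OP(s)) > time(r). -/
open Finset

attribute [local instance] Classical.propDecidable

/-- Distinct points of a permutation point set have distinct times. -/
theorem IsPermPointSet.eq_of_time_eq {n : ℕ} {X : Finset Pt} (hX : IsPermPointSet n X)
    {a b : Pt} (ha : a ∈ X) (hb : b ∈ X) (h : a.2 = b.2) : a = b := by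
  obtain ⟨σ, rfl⟩ := hX
  simp only [Finset.mem_image, Finset.mem_univ, true_and] at ha hb
  obtain ⟨i, rfl⟩ := ha
  obtain ⟨j, rfl⟩ := hb
  have hij : i = j := Fin.ext (by simpa using h)
  rw [hij]

theorem OP_eq_of_time_eq {n : ℕ} {X : Finset Pt} (hX : IsPermPointSet n X)
    {a r : Pt} (ha : a ∈ X) (h : a.2 = r.2) : OP X r = a := by
  have hfilter : X.filter (fun p => p.2 = r.2) = {a} := by
    ext b
    simp only [Finset.mem_filter, Finset.mem_singleton]
    constructor
    · rintro ⟨hb, hbr⟩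
      exact hX.eq_of_time_eq hb ha (hbr.trans h.symm)
    · rintro rfl
      exact ⟨ha, h⟩
  simp [OP, hfilter]

theorem time_eq_of_mem_greedyStep {X G : Finset Pt} {t : ℤ} {a : Pt}
    (ha : a ∈ greedyStep X G t) : a.2 = t := by
  simp only [greedyStep, Finset.mem_biUnion, Finset.mem_image] at ha
  obtain ⟨_, _, _, _, rfl⟩ := ha
  rfl

/-- A point added by GREEDY is already present once its time has been processed. -/
theorem mem_greedyUpTo_of_time_le {X : Finset Pt} {m k : ℕ} {a : Pt}
    (ha : a ∈ greedyUpTo X m) (hk : a.2 ≤ k) : a ∈ greedyUpTo X k := by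
  have mono : Monotone (greedyUpTo X) :=
    monotone_nat_of_le_succ fun _ => Finset.subset_union_left
  induction m with
  | zero => simp [greedyUpTo] at ha
  | succ m ih =>
    rcases Finset.mem_union.1 ha with h | h
    · exact ih h
    · have := time_eq_of_mem_greedyStep h
      exact mono (by omega : m + 1 ≤ k) ha

theorem exists_mem_greedyStep {X : Finset Pt} {m : ℕ} {a : Pt} (ha : a ∈ greedyUpTo X m) :
    ∃ t < m, a ∈ greedyStep X (greedyUpTo X t) ((t : ℤ) + 1) := by
  induction m with
  | zero => simp [greedyUpTo] at ha
  | succ m ih =>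
    rcases Finset.mem_union.1 ha with h | h
    · obtain ⟨t, ht, hat⟩ := ih h
      exact ⟨t, by omega, hat⟩
    · exact ⟨m, by omega, h⟩

/-- Every point `s` added by GREEDY comes from a point `u` of smaller time and the same key such
that the rectangle spanned by `u` and the processed point contains no other point of time less
than that of `s`. -/
theorem exists_source_of_mem_greedyG {n : ℕ} {X : Finset Pt} {s : Pt} (hs : s ∈ greedyG n X) :
    ∃ a ∈ X, a.2 = s.2 ∧ ∃ u ∈ X ∪ greedyG n X, u.1 = s.1 ∧ u.2 < s.2 ∧
      ∀ r ∈ X ∪ greedyG n X, r.2 < s.2 → inRect a u r → r = u := by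
  obtain ⟨t, ht, hst⟩ := exists_mem_greedyStep hs
  simp only [greedyStep, Finset.mem_biUnion, Finset.mem_image, Finset.mem_filter] at hst
  obtain ⟨a, ⟨haX, hat⟩, u, ⟨⟨hu, hut⟩, -, hempty⟩, rfl⟩ := hst
  refine ⟨a, haX, hat, u, ?_, rfl, hut, fun r hr hrt => hempty r ⟨?_, hrt⟩⟩
  · refine (Finset.mem_union.1 hu).elim (Finset.mem_union_left _) fun h => ?_
    exact Finset.mem_union_right _ (mem_greedyUpTo_of_time_le h (by omega))
  · refine (Finset.mem_union.1 hr).elim (Finset.mem_union_left _) fun h => ?_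
    exact Finset.mem_union_right _ (mem_greedyUpTo_of_time_le h (by simp at hrt; omega))

/-- hiding lemma, north-east version. Let `p, q, r ∈ X ∪ G` with
`time(q) < time(p)` and `key(p) < key(q)`, and suppose `r` hides `q` from `p`. If `s` is the
point of `X ∪ G` of smallest time among those below `q` with time greater than `time(r)` and
key greater than `key(r)`, then `key(OP(s)) > key(r)` and `time(OP(s)) > time(r)`. -/
theorem hidden_lemma_right (n : ℕ) (X : Finset Pt) (hX : IsPermPointSet n X)
    (p q r s : Pt)
    (hp : p ∈ X ∪ greedyG n X) (hq : q ∈ X ∪ greedyG n X) (hr : r ∈ X ∪ greedyG n X)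
    (ht : q.2 < p.2) (hk : p.1 < q.1)
    (hhide : (r.2 = q.2 ∧ r.1 < q.1 ∧ inRect p q r) ∨ inOpenRect p q r)
    (hs : s ∈ X ∪ greedyG n X) (hs1 : s.1 = q.1) (hs2 : q.2 < s.2)
    (hs3 : r.2 < s.2) (hs4 : r.1 < s.1)
    (hmin : ∀ s' ∈ X ∪ greedyG n X,
      s'.1 = q.1 → q.2 < s'.2 → r.2 < s'.2 → r.1 < s'.1 → s.2 ≤ s'.2) :
    r.1 < (OP X s).1 ∧ r.2 < (OP X s).2 := by
  have hqr : q.2 ≤ r.2 := by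
    rcases hhide with h | h
    · exact h.1.ge
    · have := h.2.2.1
      omega
  rcases Finset.mem_union.1 hs with hsX | hsG
  · rw [OP_eq_of_time_eq hX hsX rfl]
    exact ⟨hs4, hs3⟩
  · obtain ⟨a, haX, has, u, hu, hus, hut, hempty⟩ := exists_source_of_mem_greedyG hsG
    rw [OP_eq_of_time_eq hX haX has]
    refine ⟨?_, by omega⟩
    by_contra! har
    have hur : u.2 ≤ r.2 := by
      by_contra! h
      have := hmin u hu (by omega) (by omega) h (by omega)
      omega
    have hru : r = u := hempty r hr hs3 (by simp only [inRect]; omega)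
    rw [hru] at hs4
    omega
end

section
/- For every block B of X there is no point of X ∪ G in UPB(B); that is, no point s ∈ X ∪ G satisfies time(s) < time(Top(B)) and key(s) = key(p) for some p ∈ B. -/
open Finset

attribute [local instance] Classical.propDecidable

/-- Every point added by GREEDY has the key of a point of `X` that is not later. -/
lemma exists_mem_key_eq_of_mem_greedyUpTo (X : Finset Pt) (t : ℕ) {s : Pt}
    (hs : s ∈ greedyUpTo X t) : ∃ x ∈ X, x.1 = s.1 ∧ x.2 ≤ s.2 := by
  induction t generalizing s with
  | zero => simp [greedyUpTo] at hs
  | succ t ih =>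
    rw [greedyUpTo, Finset.mem_union] at hs
    rcases hs with hs | hs
    · exact ih hs
    · simp only [greedyStep, Finset.mem_biUnion, Finset.mem_image, Finset.mem_filter,
        Finset.mem_union] at hs
      obtain ⟨p, -, q, ⟨⟨hq, hqt⟩, -⟩, rfl⟩ := hs
      rcases hq with hq | hq
      · exact ⟨q, hq, rfl, hqt.le⟩
      · obtain ⟨x, hx, hxk, hxt⟩ := ih hq
        exact ⟨x, hx, hxk, hxt.trans hqt.le⟩

/-- Points of a permutation point set are determined by their keys. -/
lemma IsPermPointSet.eq_of_key_eq_s9 {n : ℕ} {X : Finset Pt} (hX : IsPermPointSet n X) {x y : Pt}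
    (hx : x ∈ X) (hy : y ∈ X) (h : x.1 = y.1) : x = y := by
  obtain ⟨σ, rfl⟩ := hX
  simp only [Finset.mem_image, Finset.mem_univ, true_and] at hx hy
  obtain ⟨a, rfl⟩ := hx
  obtain ⟨b, rfl⟩ := hy
  have hab : a = b := σ.injective (Fin.ext (by simpa using h))
  rw [hab]

/-- No point of `B` has time smaller than `Top(B)`. -/
lemma TopPt_time_le {B : Finset Pt} {p : Pt} (hp : p ∈ B) : (TopPt B).2 ≤ p.2 := by
  obtain ⟨m, hm, hmin⟩ := B.exists_min_image Prod.snd ⟨p, hp⟩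
  have hne : (B.filter (fun p => ∀ q ∈ B, p.2 ≤ q.2)).toList ≠ [] := by
    rw [Ne, Finset.toList_eq_nil]
    exact Finset.ne_empty_of_mem (Finset.mem_filter.mpr ⟨hm, hmin⟩)
  have hTop : TopPt B ∈ (B.filter (fun p => ∀ q ∈ B, p.2 ≤ q.2)).toList := by
    obtain ⟨a, l, hal⟩ := List.exists_cons_of_ne_nil hne
    rw [TopPt, hal]
    exact List.mem_cons_self
  exact (Finset.mem_filter.mp (Finset.mem_toList.mp hTop)).2 p hp

/-- For every block `B` of `X`, there is no point of `X ∪ G` in `UPB(B)`: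
no point of `X ∪ G` has time smaller than `time(Top(B))` and the key of some point of `B`. -/
theorem no_point_in_upperbox (n : ℕ) (X : Finset Pt) (hX : IsPermPointSet n X)
    (B : Finset Pt) (hB : IsBlock X B) :
    ¬ ∃ s ∈ X ∪ greedyG n X, s.2 < (TopPt B).2 ∧ ∃ p ∈ B, s.1 = p.1 := by
  rintro ⟨s, hs, hst, p, hp, hsp⟩
  obtain ⟨x, hx, hxk, hxt⟩ : ∃ x ∈ X, x.1 = s.1 ∧ x.2 ≤ s.2 := by
    rcases Finset.mem_union.mp hs with hs | hs
    · exact ⟨s, hs, rfl, le_rfl⟩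
    · exact exists_mem_key_eq_of_mem_greedyUpTo X n hs
  have hpX : p ∈ X := by
    obtain ⟨-, ⟨i, j, rfl⟩, -⟩ := hB
    exact (Finset.mem_filter.mp hp).1
  obtain rfl : x = p := hX.eq_of_key_eq_s9 hx hpX (hxk.trans hsp)
  exact absurd (TopPt_time_le hp) (not_le.mpr (hxt.trans_lt hst))
end
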